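/- Let n ≥ 2, (a,b) an open interval, f : (a,b) → ℝ matrix convex of order n, and λ₀ ∈ (a,b). Then the function g(x) = [x, λ₀]_f (i.e., g(x) = (f(x)−f(λ₀))/(x−λ₀) for x ≠ λ₀ and g(λ₀) = f′(λ₀)) is matrix monotone of order n on (a,b). -/

import Mathlib

open Set Matrix
open scoped ComplexOrder

/-- `f` is matrix monotone of order `n` on `(a,b)`. -/
def MatrixMonotoneOrder (n : ℕ) (a b : ℝ) (f : ℝ → ℝ) : Prop :=
  ∀ (A B : Matrix (Fin n) (Fin n) ℂ) (hA : A.IsHermitian) (hB : B.IsHermitian),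
    (∀ i, hA.eigenvalues i ∈ Ioo a b) → (∀ i, hB.eigenvalues i ∈ Ioo a b) →
    (B - A).PosSemidef → (hB.cfc f - hA.cfc f).PosSemidef

/-- `f` is matrix convex of order `n` on `(a,b)`. -/
def MatrixConvexOrder (n : ℕ) (a b : ℝ) (f : ℝ → ℝ) : Prop :=
  ∀ (A B : Matrix (Fin n) (Fin n) ℂ) (hA : A.IsHermitian) (hB : B.IsHermitian)
    (μ : ℝ), μ ∈ Icc (0 : ℝ) 1 →
    ∀ (hC : (μ • A + (1 - μ) • B).IsHermitian),
    (∀ i, hA.eigenvalues i ∈ Ioo a b) → (∀ i, hB.eigenvalues i ∈ Ioo a b) →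
    (μ • hA.cfc f + (1 - μ) • hB.cfc f - hC.cfc f).PosSemidef

/-!
Let `A` and `B = A + τ v v*` be Hermitian, with eigenvalues `aᵢ` and `bⱼ`, and let `q` be the
polynomial `⟨v, adj(X - A) w⟩`, which does not change when `A` is replaced by `B`. If the spectrum
of `A` is simple and `v` is cyclic, then for every function `f`

  `⟨w, f(B) w⟩ - ⟨w, f(A) w⟩ = τ · (f |q|²)[a₁, …, aₙ, b₁, …, bₙ]`,

a divided difference at `2n` nodes, and every polynomial of degree less than `n` arises as `q`.
Applied along the path `T₁`, `T₂`, `T₃`, where `Tₖ = T₀ + k v v*`, midpoint convexity of `f` makes a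
positive combination of divided differences of `f |q|²` at `2n + 1` nodes nonnegative. Since these
nodes can be placed in any subinterval, the mean value theorem gives `(f |q|²)⁽²ⁿ⁾ ≥ 0` when `f` is
smooth, hence nonnegativity of all divided differences of order `2n`; mollification extends this to
every matrix convex `f`.

The case `q = 1` forces `f` to be differentiable when `n ≥ 2`: blowing up at a corner of the convex
function `f` turns it into a multiple of `max x 0`, up to a linear function, and `max x 0` has a
negative divided difference at suitable nodes, of any prescribed number `m ≥ 4`.

Finally, the divided difference of `[·, z]_f |q|²` at `2n` nodes equals that of `(f - f z) |q|²` at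
these nodes together with `z`, so it is nonnegative, which is monotonicity of `[·, z]_f` under
generic rank one updates. Letting `z` tend to `λ₀`, and perturbing and summing rank one updates,
gives the theorem.
-/

open Polynomial Filter Topology InnerProductSpace

section DivDiff

variable {K : Type*} [Field K] [DecidableEq K]

/-- The divided difference `F[x₀, …, xₘ]` at the elements of `S = {x₀, …, xₘ}`. Taking the nodes to
be a finset builds in that they are distinct. -/
def divDiff (S : Finset K) (F : K → K) : K :=
  ∑ x ∈ S, F x / ∏ y ∈ S.erase x, (x - y)

lemma divDiff_congr {S : Finset K} {F G : K → K} (h : ∀ x ∈ S, F x = G x) :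
    divDiff S F = divDiff S G :=
  Finset.sum_congr rfl fun x hx => by rw [h x hx]

lemma divDiff_sub (S : Finset K) (F G : K → K) :
    divDiff S (fun x => F x - G x) = divDiff S F - divDiff S G := by
  simp only [divDiff, sub_div, Finset.sum_sub_distrib]

lemma divDiff_const_mul (S : Finset K) (c : K) (F : K → K) :
    divDiff S (fun x => c * F x) = c * divDiff S F := by
  simp only [divDiff, mul_div_assoc, Finset.mul_sum]

lemma divDiff_sum {κ : Type*} (t : Finset κ) (S : Finset K) (F : κ → K → K) :
    divDiff S (fun x => ∑ k ∈ t, F k x) = ∑ k ∈ t, divDiff S (F k) := by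
  simp only [divDiff, Finset.sum_div]
  exact Finset.sum_comm

lemma divDiff_eval {S : Finset K} {P : K[X]} (hP : P.degree < S.card) :
    divDiff S (fun x => P.eval x) = P.coeff (S.card - 1) :=
  (Lagrange.coeff_eq_sum (s := S) (v := id) (injOn_id _) hP).symm

lemma divDiff_union {S T : Finset K} (h : Disjoint S T) (F : K → K) :
    divDiff (S ∪ T) F =
      ∑ x ∈ S, F x / ((∏ y ∈ S.erase x, (x - y)) * ∏ y ∈ T, (x - y)) +
      ∑ x ∈ T, F x / ((∏ y ∈ T.erase x, (x - y)) * ∏ y ∈ S, (x - y)) := by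
  have hhalf : ∀ {S T : Finset K}, Disjoint S T → ∀ x ∈ S,
      F x / ∏ y ∈ (S ∪ T).erase x, (x - y) =
        F x / ((∏ y ∈ S.erase x, (x - y)) * ∏ y ∈ T, (x - y)) := fun {S T} h x hx => by
    rw [Finset.erase_union_distrib, Finset.erase_eq_of_notMem (Finset.disjoint_left.1 h hx),
      Finset.prod_union (h.mono_left (Finset.erase_subset x S))]
  rw [divDiff, Finset.sum_union h, Finset.sum_congr rfl (hhalf h), Finset.union_comm,
    Finset.sum_congr rfl (hhalf h.symm)]

lemma divDiff_image_affine {s : K} (hs : s ≠ 0) (t : K) (S : Finset K) (F : K → K) :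
    divDiff (S.image fun x => t + s * x) F =
      divDiff S (fun x => F (t + s * x)) / s ^ (S.card - 1) := by
  have hinj : Function.Injective fun x => t + s * x :=
    (add_right_injective t).comp (mul_right_injective₀ hs)
  rw [divDiff, divDiff, Finset.sum_image hinj.injOn, Finset.sum_div]
  refine Finset.sum_congr rfl fun x hx => ?_
  rw [← Finset.image_erase hinj, Finset.prod_image hinj.injOn, div_div]
  simp only [add_sub_add_left_eq_sub, ← mul_sub, Finset.prod_mul_distrib, Finset.prod_const,
    Finset.card_erase_of_mem hx, mul_comm]

lemma divDiff_insert_mul_sub {S : Finset K} {z : K} (hz : z ∉ S) (F : K → K) :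
    divDiff (insert z S) (fun x => F x * (x - z)) = divDiff S F := by
  rw [divDiff, Finset.sum_insert hz, sub_self, mul_zero, zero_div, zero_add]
  refine Finset.sum_congr rfl fun x hx => ?_
  have hxz : x ≠ z := ne_of_mem_of_not_mem hx hz
  rw [Finset.erase_insert_of_ne hxz.symm,
    Finset.prod_insert fun h => hz (Finset.mem_of_mem_erase h), mul_comm (x - z),
    mul_div_mul_right _ _ (sub_ne_zero.2 hxz)]

lemma divDiff_union_mul_prod {S T : Finset K} (h : Disjoint S T) (F : K → K) :
    divDiff (S ∪ T) (fun x => F x * ∏ y ∈ T, (x - y)) = divDiff S F := by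
  induction T using Finset.induction_on generalizing F with
  | empty => simp only [Finset.union_empty, Finset.prod_empty, mul_one]
  | insert z T hz ih =>
    rw [Finset.disjoint_insert_right] at h
    have hzST : z ∉ S ∪ T := by simp only [Finset.mem_union, h.1, hz, or_self, not_false_eq_true]
    rw [← ih h.2, ← divDiff_insert_mul_sub hzST, Finset.union_insert]
    exact divDiff_congr fun x _ => by rw [Finset.prod_insert hz]; ring

lemma prod_sub_sub_prod_sub {T U : Finset K} (hcard : T.card = U.card) (x : K) :
    ∏ y ∈ T, (x - y) - ∏ y ∈ U, (x - y) =
      ∑ u ∈ U, (∏ t ∈ T, (u - t)) / (∏ y ∈ U.erase u, (u - y)) * ∏ y ∈ U.erase u, (x - y) := by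
  set P : K[X] := Lagrange.nodal T id - Lagrange.nodal U id with hP
  have hdeg : P.degree < U.card := by
    rw [← hcard, ← Lagrange.degree_nodal (s := T) (v := id)]
    refine degree_sub_lt_left ?_ Lagrange.nodal_ne_zero ?_
    · rw [Lagrange.degree_nodal, Lagrange.degree_nodal, hcard]
    · rw [Lagrange.nodal_monic.leadingCoeff, Lagrange.nodal_monic.leadingCoeff]
  have hinterp := congrArg (eval x) (Lagrange.eq_interpolate (injOn_id (U : Set K)) hdeg)
  rw [Lagrange.interpolate_eq_sum, eval_finsetSum] at hinterp
  simp only [hP, eval_sub, Lagrange.eval_nodal, id_eq, eval_mul, eval_C, eval_prod, eval_X]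
    at hinterp
  rw [hinterp]
  refine Finset.sum_congr rfl fun u hu => ?_
  rw [Finset.prod_eq_zero hu (sub_self u), sub_zero]

lemma divDiff_union_sub_divDiff_union {S T U : Finset K} (hST : Disjoint S T) (hSU : Disjoint S U)
    (hTU : Disjoint T U) (hcard : T.card = U.card) (F : K → K) :
    divDiff (S ∪ U) F - divDiff (S ∪ T) F =
      ∑ u ∈ U, (∏ t ∈ T, (u - t)) / (∏ y ∈ U.erase u, (u - y)) *
        divDiff (insert u (S ∪ T)) F := by
  have hT : divDiff (S ∪ T) F = divDiff (S ∪ T ∪ U) fun x => F x * ∏ y ∈ U, (x - y) :=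
    (divDiff_union_mul_prod (Finset.disjoint_union_left.2 ⟨hSU, hTU⟩) F).symm
  have hU : divDiff (S ∪ U) F = divDiff (S ∪ T ∪ U) fun x => F x * ∏ y ∈ T, (x - y) := by
    rw [Finset.union_right_comm]
    exact (divDiff_union_mul_prod (Finset.disjoint_union_left.2 ⟨hST, hTU.symm⟩) F).symm
  have hinsert : ∀ u ∈ U, divDiff (insert u (S ∪ T)) F =
      divDiff (S ∪ T ∪ U) fun x => F x * ∏ y ∈ U.erase u, (x - y) := fun u hu => by
    rw [← divDiff_union_mul_prod (T := U.erase u), Finset.insert_union, ← Finset.union_insert,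
      Finset.insert_erase hu]
    exact Finset.disjoint_insert_left.2 ⟨Finset.notMem_erase u U,
      (Finset.disjoint_union_left.2 ⟨hSU, hTU⟩).mono_right (Finset.erase_subset u U)⟩
  rw [hT, hU, ← divDiff_sub, Finset.sum_congr rfl fun u hu => by
    rw [hinsert u hu, ← divDiff_const_mul], ← divDiff_sum]
  refine divDiff_congr fun x _ => ?_
  rw [← mul_sub, prod_sub_sub_prod_sub hcard, Finset.mul_sum]
  exact Finset.sum_congr rfl fun u _ => by ring

end DivDiff

section MeanValue

lemma tendsto_divDiff {α : Type*} {l : Filter α} {G : α → ℝ → ℝ} {F : ℝ → ℝ} {S : Finset ℝ}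
    (h : ∀ x ∈ S, Tendsto (G · x) l (𝓝 (F x))) :
    Tendsto (fun i => divDiff S (G i)) l (𝓝 (divDiff S F)) :=
  tendsto_finsetSum S fun x hx => (h x hx).div_const _

lemma exists_iteratedDeriv_eq_zero {α β : ℝ} (m : ℕ) {G : ℝ → ℝ} (hG : ContDiff ℝ m G)
    {x : Fin (m + 1) → ℝ} (hx : StrictMono x) (hI : ∀ i, x i ∈ Ioo α β) (h0 : ∀ i, G (x i) = 0) :
    ∃ ξ ∈ Ioo α β, iteratedDeriv m G ξ = 0 := by
  induction m generalizing G with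
  | zero => exact ⟨x 0, hI 0, by rw [iteratedDeriv_zero, h0 0]⟩
  | succ m ih =>
    have hrolle : ∀ i : Fin (m + 1), ∃ c ∈ Ioo (x i.castSucc) (x i.succ), deriv G c = 0 := fun i =>
      exists_deriv_eq_zero (hx Fin.castSucc_lt_succ) hG.continuous.continuousOn (by rw [h0, h0])
    choose y hy hy0 using hrolle
    have hG' : ContDiff ℝ m (deriv G) := (contDiff_succ_iff_deriv.1 (mod_cast hG)).2.2
    have hymono : StrictMono y := fun i j hij => (hy i).2.trans_le
      ((hx.monotone (Fin.succ_le_castSucc_iff.2 hij)).trans (hy j).1.le)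
    obtain ⟨ξ, hξ, h⟩ := ih hG' hymono
      (fun i => ⟨(hI _).1.trans (hy i).1, (hy i).2.trans (hI _).2⟩) hy0
    exact ⟨ξ, hξ, by rw [iteratedDeriv_succ', h]⟩

lemma iteratedDeriv_eval (P : ℝ[X]) (m : ℕ) :
    iteratedDeriv m (fun t => P.eval t) = fun t => (derivative^[m] P).eval t := by
  induction m generalizing P with
  | zero => rw [iteratedDeriv_zero, Function.iterate_zero_apply]
  | succ m ih =>
    rw [iteratedDeriv_succ', Function.iterate_succ_apply, ← ih]
    congr 1
    exact funext fun t => P.deriv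

lemma iteratedDeriv_eval_of_natDegree_le {P : ℝ[X]} {m : ℕ} (hP : P.natDegree ≤ m) (t : ℝ) :
    iteratedDeriv m (fun t => P.eval t) t = m.factorial * P.coeff m := by
  have hconst : (derivative^[m] P).natDegree = 0 := by
    have := natDegree_iterate_derivative P m
    lia
  rw [congrFun (iteratedDeriv_eval P m) t, eq_C_of_natDegree_eq_zero hconst, eval_C,
    coeff_iterate_derivative, zero_add, Nat.descFactorial_self, nsmul_eq_mul]

theorem exists_iteratedDeriv_eq_factorial_mul_divDiff {α β : ℝ} {m : ℕ} {F : ℝ → ℝ}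
    (hF : ContDiff ℝ m F) {S : Finset ℝ} (hS : ↑S ⊆ Ioo α β) (hcard : S.card = m + 1) :
    ∃ ξ ∈ Ioo α β, iteratedDeriv m F ξ = m.factorial * divDiff S F := by
  set P : ℝ[X] := Lagrange.interpolate S id F
  have heval : ∀ x ∈ S, P.eval x = F x := fun x hx =>
    Lagrange.eval_interpolate_at_node F (injOn_id _) hx
  have hdeg : P.degree < S.card := Lagrange.degree_interpolate_lt F (injOn_id _)
  have hle : P.natDegree ≤ m := natDegree_le_of_degree_le
    ((Lagrange.degree_interpolate_le F (injOn_id _)).trans_eq (by rw [hcard, Nat.add_sub_cancel]))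
  have hP : ContDiff ℝ m fun t => P.eval t := by simpa using P.contDiff_aeval (𝕜 := ℝ) (n := m)
  have hmem : ∀ i, S.orderEmbOfFin hcard i ∈ S := S.orderEmbOfFin_mem hcard
  obtain ⟨ξ, hξ, h0⟩ := exists_iteratedDeriv_eq_zero m (hF.sub hP)
    (S.orderEmbOfFin hcard).strictMono (fun i => hS (hmem i))
    (fun i => sub_eq_zero.2 (heval _ (hmem i)).symm)
  refine ⟨ξ, hξ, ?_⟩
  rw [iteratedDeriv_fun_sub hF.contDiffAt hP.contDiffAt, sub_eq_zero] at h0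
  rw [h0, iteratedDeriv_eval_of_natDegree_le hle,
    divDiff_congr fun x hx => (heval x hx).symm, divDiff_eval hdeg, hcard, Nat.add_sub_cancel]

end MeanValue

section RankOne

variable {ι : Type*} [Fintype ι] {E : Type*} [NormedAddCommGroup E] [InnerProductSpace ℂ E]

/-- The quadratic form `⟨w, f(T) w⟩`, where `T` has eigenbasis `e` with eigenvalues `a`. -/
noncomputable def quadForm (e : OrthonormalBasis ι ℂ E) (a : ι → ℝ) (f : ℝ → ℝ) (w : E) : ℝ :=
  ∑ i, f (a i) * ‖⟪e i, w⟫_ℂ‖ ^ 2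

/-- `B = A + τ v v*` in terms of the eigenbases `e`, `u` and the eigenvalues `a`, `b` of the
Hermitian operators `A` and `B`, when `A` has simple spectrum and `v` is cyclic for `A`. The field
`rel` is the relation `B - A = τ v v*` between the vectors `e i` and `u j`. -/
structure GenericRankOneUpdate (e : OrthonormalBasis ι ℂ E) (a : ι → ℝ)
    (u : OrthonormalBasis ι ℂ E) (b : ι → ℝ) (τ : ℝ) (v : E) : Prop where
  rel : ∀ i j, ((b j - a i : ℝ) : ℂ) * ⟪e i, u j⟫_ℂ = τ * (⟪e i, v⟫_ℂ * ⟪v, u j⟫_ℂ)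
  injective : Function.Injective a
  inner_ne_zero : ∀ i, ⟪e i, v⟫_ℂ ≠ 0
  scalar_ne_zero : τ ≠ 0

/-- The polynomial `⟨v, adj(X - A) w⟩`, for `A` with eigenbasis `e` and eigenvalues `a`. -/
noncomputable def adjPoly [DecidableEq ι] (e : OrthonormalBasis ι ℂ E) (a : ι → ℝ) (v w : E) :
    ℂ[X] :=
  ∑ i, C (⟪v, e i⟫_ℂ * ⟪e i, w⟫_ℂ) * Lagrange.nodal (Finset.univ.erase i) fun l => (a l : ℂ)

lemma inner_mul_inner_symm_eq (x y : E) :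
    ⟪x, y⟫_ℂ * ⟪y, x⟫_ℂ = ((‖⟪x, y⟫_ℂ‖ ^ 2 : ℝ) : ℂ) := by
  rw [← inner_conj_symm y x, Complex.mul_conj', Complex.ofReal_pow]

section AdjPoly

variable [DecidableEq ι] (e : OrthonormalBasis ι ℂ E) (a : ι → ℝ) (v w : E)

lemma eval_adjPoly (x : ℂ) :
    (adjPoly e a v w).eval x =
      ∑ i, ⟪v, e i⟫_ℂ * ⟪e i, w⟫_ℂ * ∏ l ∈ Finset.univ.erase i, (x - a l) := by
  simp only [adjPoly, eval_finsetSum, eval_C_mul, Lagrange.eval_nodal]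

lemma eval_adjPoly_eigenvalue (i : ι) :
    (adjPoly e a v w).eval (a i : ℂ) =
      ⟪v, e i⟫_ℂ * ⟪e i, w⟫_ℂ * ((∏ l ∈ Finset.univ.erase i, (a i - a l) : ℝ) : ℂ) := by
  rw [eval_adjPoly, Finset.sum_eq_single i (fun k _ hk => ?_) (by simp)]
  · push_cast
    rfl
  · rw [Finset.prod_eq_zero (Finset.mem_erase.2 ⟨hk.symm, Finset.mem_univ i⟩) (sub_self _),
      mul_zero]

lemma degree_adjPoly_lt : (adjPoly e a v w).degree < Fintype.card ι := by
  refine (degree_sum_le _ _).trans_lt ((Finset.sup_lt_iff (WithBot.bot_lt_coe _)).2 fun i hi => ?_)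
  refine (degree_mul_le_of_le degree_C_le le_rfl).trans_lt ?_
  rw [zero_add, Lagrange.degree_nodal]
  exact mod_cast Finset.card_erase_lt_of_mem hi

end AdjPoly

namespace GenericRankOneUpdate

variable {e u : OrthonormalBasis ι ℂ E} {a b : ι → ℝ} {τ : ℝ} {v : E}

lemma inner_right_ne_zero (h : GenericRankOneUpdate e a u b τ v) (j : ι) : ⟪v, u j⟫_ℂ ≠ 0 := by
  intro h0
  have hz : ∀ i, b j = a i ∨ ⟪e i, u j⟫_ℂ = 0 := fun i => by
    have := h.rel i j
    rw [h0, mul_zero, mul_zero, mul_eq_zero] at this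
    exact this.imp (fun hba => sub_eq_zero.1 (Complex.ofReal_eq_zero.1 hba)) id
  obtain ⟨i, hi⟩ : ∃ i, ⟪e i, u j⟫_ℂ ≠ 0 := by
    by_contra! hall
    have := e.sum_sq_norm_inner_right (u j)
    simp [hall] at this
  have hk : ∀ k, k ≠ i → ⟪e k, u j⟫_ℂ = 0 := fun k hk =>
    (hz k).resolve_left fun hbk => hk (h.injective (hbk.symm.trans ((hz i).resolve_right hi)))
  have hsum := e.sum_inner_mul_inner v (u j)
  rw [h0, Finset.sum_eq_single i (fun k _ hki => by rw [hk k hki, mul_zero]) (by simp)] at hsum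
  exact mul_ne_zero (fun hv => h.inner_ne_zero i (inner_eq_zero_symm.1 hv)) hi hsum

lemma ne (h : GenericRankOneUpdate e a u b τ v) (i j : ι) : b j ≠ a i := by
  intro hba
  have := h.rel i j
  rw [hba, sub_self, Complex.ofReal_zero, zero_mul] at this
  exact mul_ne_zero (Complex.ofReal_ne_zero.2 h.scalar_ne_zero)
    (mul_ne_zero (h.inner_ne_zero i) (h.inner_right_ne_zero j)) this.symm

lemma injective_right (h : GenericRankOneUpdate e a u b τ v) : Function.Injective b := by
  intro j k hjk
  by_contra hne
  have hk := h.inner_right_ne_zero k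
  have hprop : u j = (⟪v, u j⟫_ℂ / ⟪v, u k⟫_ℂ) • u k := by
    refine ext_inner_left_basis e.toBasis fun i => ?_
    have hsub : ((b k - a i : ℝ) : ℂ) ≠ 0 := Complex.ofReal_ne_zero.2 (sub_ne_zero.2 (h.ne i k))
    rw [inner_smul_right, OrthonormalBasis.coe_toBasis]
    refine mul_left_cancel₀ hsub ?_
    calc ((b k - a i : ℝ) : ℂ) * ⟪e i, u j⟫_ℂ = τ * (⟪e i, v⟫_ℂ * ⟪v, u j⟫_ℂ) := hjk ▸ h.rel i j
      _ = ⟪v, u j⟫_ℂ / ⟪v, u k⟫_ℂ * (τ * (⟪e i, v⟫_ℂ * ⟪v, u k⟫_ℂ)) := by field_simp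
      _ = _ := by rw [← h.rel i k, mul_left_comm]
  have h1 : ⟪u k, u j⟫_ℂ = 0 := u.orthonormal.2 (Ne.symm hne)
  rw [hprop, inner_smul_right, inner_self_eq_one_of_norm_eq_one (u.norm_eq_one k), mul_one] at h1
  exact div_ne_zero (h.inner_right_ne_zero j) hk h1

lemma symm (h : GenericRankOneUpdate e a u b τ v) : GenericRankOneUpdate u b e a (-τ) v where
  rel j i := by
    have := congrArg (starRingEnd ℂ) (h.rel i j)
    simp only [map_mul, Complex.conj_ofReal, inner_conj_symm] at this
    push_cast at this ⊢
    linear_combination -this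
  injective := h.injective_right
  inner_ne_zero j h0 := h.inner_right_ne_zero j (inner_eq_zero_symm.1 h0)
  scalar_ne_zero := neg_ne_zero.2 h.scalar_ne_zero

lemma affine (h : GenericRankOneUpdate e a u b τ v) (t : ℝ) {s : ℝ} (hs : s ≠ 0) :
    GenericRankOneUpdate e (fun i => t + s * a i) u (fun j => t + s * b j) (s * τ) v where
  rel i j := by
    have := h.rel i j
    push_cast at this ⊢
    linear_combination (s : ℂ) * this
  injective := ((add_right_injective t).comp (mul_right_injective₀ hs)).comp h.injective
  inner_ne_zero := h.inner_ne_zero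
  scalar_ne_zero := mul_ne_zero hs h.scalar_ne_zero

lemma disjoint (h : GenericRankOneUpdate e a u b τ v) :
    Disjoint (Finset.univ.image a) (Finset.univ.image b) := by
  simp only [Finset.disjoint_left, Finset.mem_image, Finset.mem_univ, true_and]
  rintro _ ⟨i, rfl⟩ ⟨j, hj⟩
  exact h.ne i j hj

lemma card_image_union_image (h : GenericRankOneUpdate e a u b τ v) :
    (Finset.univ.image a ∪ Finset.univ.image b).card = 2 * Fintype.card ι := by
  rw [Finset.card_union_of_disjoint h.disjoint, Finset.card_image_of_injective _ h.injective,
    Finset.card_image_of_injective _ h.injective_right, Finset.card_univ, two_mul]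

variable [DecidableEq ι]

lemma mul_eval_adjPoly (h : GenericRankOneUpdate e a u b τ v) (w : E) (j : ι) :
    τ * ⟪u j, v⟫_ℂ * (adjPoly e a v w).eval (b j : ℂ) = (∏ l, ((b j : ℂ) - a l)) * ⟪u j, w⟫_ℂ := by
  rw [← e.sum_inner_mul_inner (u j) w, eval_adjPoly, Finset.mul_sum, Finset.mul_sum]
  refine Finset.sum_congr rfl fun i hi => ?_
  have hs := h.symm.rel j i
  push_cast at hs
  rw [← Finset.mul_prod_erase _ _ hi]
  linear_combination (⟪e i, w⟫_ℂ * ∏ l ∈ Finset.univ.erase i, ((b j : ℂ) - a l)) * hs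

lemma nodal_sub_nodal (h : GenericRankOneUpdate e a u b τ v) :
    (Lagrange.nodal Finset.univ fun l => (a l : ℂ)) -
      (Lagrange.nodal Finset.univ fun l => (b l : ℂ)) = C (τ : ℂ) * adjPoly e a v v := by
  cases isEmpty_or_nonempty ι
  · simp [adjPoly]
  refine eq_of_degrees_lt_of_eval_index_eq Finset.univ
    (Complex.ofReal_injective.comp h.injective_right).injOn ?_ ?_ fun j hj => ?_
  · refine (degree_sub_lt_left ?_ Lagrange.nodal_ne_zero ?_).trans_eq Lagrange.degree_nodal
    · rw [Lagrange.degree_nodal, Lagrange.degree_nodal]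
    · rw [Lagrange.nodal_monic.leadingCoeff, Lagrange.nodal_monic.leadingCoeff]
  · rw [degree_C_mul (Complex.ofReal_ne_zero.2 h.scalar_ne_zero)]
    exact degree_adjPoly_lt e a v v
  · have hnode : (Lagrange.nodal Finset.univ fun l => (b l : ℂ)).eval (b j : ℂ) = 0 :=
      Lagrange.eval_nodal_at_node (v := fun l => (b l : ℂ)) hj
    rw [Function.comp_apply, eval_sub, hnode, sub_zero, eval_C_mul, Lagrange.eval_nodal]
    refine mul_right_cancel₀ (h.symm.inner_ne_zero j) ?_
    rw [← h.mul_eval_adjPoly v j]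
    ring

lemma prod_eigenvalue_sub (h : GenericRankOneUpdate e a u b τ v) (i : ι) :
    ∏ l, (a i - b l) = -(τ * ‖⟪e i, v⟫_ℂ‖ ^ 2 * ∏ l ∈ Finset.univ.erase i, (a i - a l)) := by
  have := congrArg (eval (a i : ℂ)) h.nodal_sub_nodal
  rw [eval_sub, eval_C_mul, Lagrange.eval_nodal, Lagrange.eval_nodal,
    Finset.prod_eq_zero (Finset.mem_univ i) (sub_self (a i : ℂ)), zero_sub, eval_adjPoly_eigenvalue,
    mul_comm ⟪v, e i⟫_ℂ, inner_mul_inner_symm_eq, neg_eq_iff_eq_neg] at this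
  rw [mul_assoc]
  exact mod_cast this

lemma adjPoly_eq (h : GenericRankOneUpdate e a u b τ v) (w : E) :
    adjPoly e a v w = adjPoly u b v w := by
  refine eq_of_degrees_lt_of_eval_index_eq Finset.univ
    (Complex.ofReal_injective.comp h.injective_right).injOn (degree_adjPoly_lt e a v w)
    (degree_adjPoly_lt u b v w) fun j _ => ?_
  have hprod : ∏ l, ((b j : ℂ) - a l) =
      τ * (⟪u j, v⟫_ℂ * ⟪v, u j⟫_ℂ) * ((∏ l ∈ Finset.univ.erase j, (b j - b l) : ℝ) : ℂ) := by
    rw [inner_mul_inner_symm_eq]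
    exact mod_cast (h.symm.prod_eigenvalue_sub j).trans (by ring)
  refine mul_left_cancel₀ (mul_ne_zero (Complex.ofReal_ne_zero.2 h.scalar_ne_zero)
    (h.symm.inner_ne_zero j)) ?_
  rw [Function.comp_apply, h.mul_eval_adjPoly, hprod, eval_adjPoly_eigenvalue]
  ring

lemma prod_erase_ne_zero (h : GenericRankOneUpdate e a u b τ v) (i : ι) :
    ∏ l ∈ Finset.univ.erase i, (a i - a l) ≠ 0 :=
  Finset.prod_ne_zero_iff.2 fun _ hl => sub_ne_zero.2 fun hil =>
    Finset.ne_of_mem_erase hl (h.injective hil).symm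

lemma exists_adjPoly_eq (h : GenericRankOneUpdate e a u b τ v) {p : ℂ[X]}
    (hp : p.degree < Fintype.card ι) : ∃ w, adjPoly e a v w = p := by
  refine ⟨∑ i, (p.eval (a i : ℂ) /
    (⟪v, e i⟫_ℂ * ((∏ l ∈ Finset.univ.erase i, (a i - a l) : ℝ) : ℂ))) • e i, ?_⟩
  refine eq_of_degrees_lt_of_eval_index_eq Finset.univ
    (Complex.ofReal_injective.comp h.injective).injOn (degree_adjPoly_lt e a v _) hp fun i _ => ?_
  have hv : ⟪v, e i⟫_ℂ ≠ 0 := fun h0 => h.inner_ne_zero i (inner_eq_zero_symm.1 h0)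
  have hprod := Complex.ofReal_ne_zero.2 (h.prod_erase_ne_zero i)
  rw [Function.comp_apply, eval_adjPoly_eigenvalue, e.orthonormal.inner_right_fintype]
  field_simp

lemma sum_div_prod_eq (h : GenericRankOneUpdate e a u b τ v) (f : ℝ → ℝ) (w : E) :
    ∑ x ∈ Finset.univ.image a, f x * ‖(adjPoly e a v w).eval (x : ℂ)‖ ^ 2 /
        ((∏ y ∈ (Finset.univ.image a).erase x, (x - y)) * ∏ y ∈ Finset.univ.image b, (x - y)) =
      -(quadForm e a f w / τ) := by
  rw [Finset.sum_image h.injective.injOn, quadForm, Finset.sum_div, ← Finset.sum_neg_distrib]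
  refine Finset.sum_congr rfl fun i _ => ?_
  have hprod := h.prod_erase_ne_zero i
  have hv := norm_ne_zero_iff.2 (h.inner_ne_zero i)
  have hτ := h.scalar_ne_zero
  rw [← Finset.image_erase h.injective, Finset.prod_image h.injective.injOn,
    Finset.prod_image h.injective_right.injOn, h.prod_eigenvalue_sub, eval_adjPoly_eigenvalue,
    norm_mul, norm_mul, Complex.norm_real, Real.norm_eq_abs, mul_pow, mul_pow, sq_abs,
    norm_inner_symm v]
  field_simp

theorem quadForm_sub (h : GenericRankOneUpdate e a u b τ v) (f : ℝ → ℝ) (w : E) :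
    quadForm u b f w - quadForm e a f w =
      τ * divDiff (Finset.univ.image a ∪ Finset.univ.image b)
        fun x => f x * ‖(adjPoly e a v w).eval (x : ℂ)‖ ^ 2 := by
  have hτ := h.scalar_ne_zero
  rw [divDiff_union h.disjoint, h.sum_div_prod_eq, h.adjPoly_eq, h.symm.sum_div_prod_eq]
  field_simp
  ring

theorem quadForm_slope_sub {u' : OrthonormalBasis ι ℂ E} {b' : ι → ℝ} {τ' σ : ℝ}
    (h : GenericRankOneUpdate e a u b τ v) (h' : GenericRankOneUpdate e a u' b' τ' v)
    (hb : GenericRankOneUpdate u b u' b' σ v) (f : ℝ → ℝ) (w : E) :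
    (quadForm u' b' f w - quadForm e a f w) / τ' - (quadForm u b f w - quadForm e a f w) / τ =
      ∑ k, σ * ‖⟪u' k, v⟫_ℂ‖ ^ 2 *
        divDiff (insert (b' k) (Finset.univ.image a ∪ Finset.univ.image b))
          fun x => f x * ‖(adjPoly e a v w).eval (x : ℂ)‖ ^ 2 := by
  rw [h.quadForm_sub, h'.quadForm_sub, mul_div_cancel_left₀ _ h.scalar_ne_zero,
    mul_div_cancel_left₀ _ h'.scalar_ne_zero,
    divDiff_union_sub_divDiff_union h.disjoint h'.disjoint hb.disjoint
      (by rw [Finset.card_image_of_injective _ h.injective_right,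
        Finset.card_image_of_injective _ h'.injective_right]),
    Finset.sum_image h'.injective_right.injOn]
  refine Finset.sum_congr rfl fun k _ => ?_
  rw [← Finset.image_erase h'.injective_right, Finset.prod_image h.injective_right.injOn,
    Finset.prod_image h'.injective_right.injOn, hb.symm.prod_eigenvalue_sub, neg_mul, neg_mul,
    neg_neg, mul_div_cancel_right₀ _ (hb.symm.prod_erase_ne_zero k)]

end GenericRankOneUpdate

end RankOne

section Diag

variable {ι : Type*} [Fintype ι] {E : Type*} [NormedAddCommGroup E] [InnerProductSpace ℂ E]

/-- The operator `T` is diagonal in the orthonormal basis `e`, with real eigenvalues `d`. Keeping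
the eigenbasis as data leaves free the choice of basis and the order of the eigenvalues. -/
def Diag (T : E →ₗ[ℂ] E) (e : OrthonormalBasis ι ℂ E) (d : ι → ℝ) : Prop :=
  ∀ i, T (e i) = (d i : ℂ) • e i

lemma exists_diag {n : ℕ} [FiniteDimensional ℂ E] (hn : Module.finrank ℂ E = n) {T : E →ₗ[ℂ] E}
    (hT : T.IsSymmetric) : ∃ (e : OrthonormalBasis (Fin n) ℂ E) (d : Fin n → ℝ), Diag T e d :=
  ⟨hT.eigenvectorBasis hn, hT.eigenvalues hn, hT.apply_eigenvectorBasis hn⟩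

lemma exists_diag_of_basis (e : OrthonormalBasis ι ℂ E) (d : ι → ℝ) :
    ∃ T : E →ₗ[ℂ] E, Diag T e d :=
  ⟨e.toBasis.constr ℂ fun i => (d i : ℂ) • e i, fun i => by
    simpa only [OrthonormalBasis.coe_toBasis] using e.toBasis.constr_basis ℂ _ i⟩

lemma add_rankOne_apply (T : E →ₗ[ℂ] E) (τ : ℝ) (v x : E) :
    (T + (τ : ℂ) • (rankOne ℂ v v).toLinearMap) x = T x + (τ * ⟪v, x⟫_ℂ) • v := by
  rw [LinearMap.add_apply, LinearMap.smul_apply, ContinuousLinearMap.coe_coe, rankOne_apply,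
    smul_smul]

lemma isSymmetric_add_rankOne {T : E →ₗ[ℂ] E} (hT : T.IsSymmetric) (τ : ℝ) (v : E) :
    (T + (τ : ℂ) • (rankOne ℂ v v).toLinearMap).IsSymmetric :=
  hT.add ((isSymmetric_rankOne_self v).smul (Complex.conj_ofReal τ))

lemma quadForm_congr {e : OrthonormalBasis ι ℂ E} {d : ι → ℝ} {f g : ℝ → ℝ}
    (h : ∀ i, f (d i) = g (d i)) (w : E) : quadForm e d f w = quadForm e d g w := by
  simp only [quadForm, h]

namespace Diag

variable {T S : E →ₗ[ℂ] E} {e u : OrthonormalBasis ι ℂ E} {a b : ι → ℝ} {τ : ℝ} {v : E}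

lemma inner_apply (h : Diag T e a) (i : ι) (x : E) : ⟪e i, T x⟫_ℂ = a i * ⟪e i, x⟫_ℂ := by
  classical
  rw [← e.sum_repr' x, map_sum, inner_sum, inner_sum, Finset.mul_sum]
  refine Finset.sum_congr rfl fun k _ => ?_
  rw [map_smul, h k, smul_comm, inner_smul_right, inner_smul_right, e.inner_eq_ite]
  split_ifs with hik
  · rw [hik]
  · simp only [mul_zero]

lemma inner_map_self {f : ℝ → ℝ} (h : Diag T e (f ∘ a)) (w : E) :
    ⟪w, T w⟫_ℂ = quadForm e a f w := by
  rw [← e.sum_inner_mul_inner, quadForm, Complex.ofReal_sum]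
  refine Finset.sum_congr rfl fun i _ => ?_
  rw [h.inner_apply, Function.comp_apply, Complex.ofReal_mul, ← inner_mul_inner_symm_eq]
  ring

lemma isSymmetric (h : Diag T e a) : T.IsSymmetric := by
  intro x y
  rw [← e.sum_inner_mul_inner, ← e.sum_inner_mul_inner]
  refine Finset.sum_congr rfl fun i _ => ?_
  rw [← inner_conj_symm, h.inner_apply, h.inner_apply, map_mul, Complex.conj_ofReal,
    inner_conj_symm]
  ring

lemma affine (h : Diag T e a) (t s : ℝ) :
    Diag ((t : ℂ) • LinearMap.id + (s : ℂ) • T) e fun i => t + s * a i := fun i => by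
  rw [LinearMap.add_apply, LinearMap.smul_apply, LinearMap.smul_apply, LinearMap.id_apply, h i,
    smul_smul, ← add_smul]
  push_cast
  rfl

lemma comp_of_diag {f : ℝ → ℝ} (he : Diag T e a) (hu : Diag T u b) (hf : Diag S e (f ∘ a)) :
    Diag S u (f ∘ b) := by
  refine fun j => ext_inner_left_basis e.toBasis fun i => ?_
  have h : (a i : ℂ) * ⟪e i, u j⟫_ℂ = b j * ⟪e i, u j⟫_ℂ := by
    rw [← he.inner_apply, hu j, inner_smul_right]
  rw [OrthonormalBasis.coe_toBasis, hf.inner_apply, inner_smul_right, Function.comp_apply,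
    Function.comp_apply]
  rcases mul_eq_mul_right_iff.1 h with hab | h0
  · rw [Complex.ofReal_inj.1 hab]
  · rw [h0, mul_zero, mul_zero]

lemma genericRankOneUpdate (hT : Diag T e a) (hS : Diag S u b)
    (h : ∀ x, S x = T x + (τ * ⟪v, x⟫_ℂ) • v) (ha : Function.Injective a)
    (hv : ∀ i, ⟪e i, v⟫_ℂ ≠ 0) (hτ : τ ≠ 0) : GenericRankOneUpdate e a u b τ v where
  rel i j := by
    have hij : ⟪e i, S (u j)⟫_ℂ = b j * ⟪e i, u j⟫_ℂ := by rw [hS j, inner_smul_right]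
    rw [h, inner_add_right, hT.inner_apply, inner_smul_right] at hij
    push_cast
    linear_combination -hij
  injective := ha
  inner_ne_zero := hv
  scalar_ne_zero := hτ

lemma mem_of_re_inner_mem (h : Diag T e a) {s : Set ℝ}
    (hs : ∀ x : E, ‖x‖ = 1 → (⟪x, T x⟫_ℂ).re ∈ s) (i : ι) : a i ∈ s := by
  have := hs (e i) (e.norm_eq_one i)
  rwa [h i, inner_smul_right, inner_self_eq_one_of_norm_eq_one (e.norm_eq_one i), mul_one,
    Complex.ofReal_re] at this

lemma re_inner_mem (h : Diag T e a) {s : Set ℝ} (hc : Convex ℝ s) (hs : ∀ i, a i ∈ s)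
    {x : E} (hx : ‖x‖ = 1) : (⟪x, T x⟫_ℂ).re ∈ s := by
  have hsum : ∑ i, ‖⟪e i, x⟫_ℂ‖ ^ 2 = 1 := by rw [e.sum_sq_norm_inner_right, hx, one_pow]
  rw [h.inner_map_self (f := id), Complex.ofReal_re, quadForm]
  simpa only [smul_eq_mul, mul_comm, id_eq] using
    hc.sum_mem (fun i _ => sq_nonneg ‖⟪e i, x⟫_ℂ‖) hsum fun i _ => hs i

lemma mem_of_diag (hT : Diag T e a) (hS : Diag T u b) {s : Set ℝ} (hc : Convex ℝ s)
    (hs : ∀ i, a i ∈ s) (i : ι) : b i ∈ s :=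
  hS.mem_of_re_inner_mem (fun _ hx => hT.re_inner_mem hc hs hx) i

lemma mem_of_eq_combination {s : Set ℝ} (hs : Convex ℝ s) {T₀ T₁ T₂ : E →ₗ[ℂ] E}
    {e₀ e₁ e₂ : OrthonormalBasis ι ℂ E} {d₀ d₁ d₂ : ι → ℝ} {μ : ℝ} (hμ : μ ∈ Icc (0 : ℝ) 1)
    (h₀ : Diag T₀ e₀ d₀) (h₁ : Diag T₁ e₁ d₁) (h₂ : Diag T₂ e₂ d₂)
    (hT : T₁ = (μ : ℂ) • T₀ + ((1 - μ : ℝ) : ℂ) • T₂) (hd₀ : ∀ i, d₀ i ∈ s) (hd₂ : ∀ i, d₂ i ∈ s)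
    (i : ι) : d₁ i ∈ s := by
  refine h₁.mem_of_re_inner_mem (fun x hx => ?_) i
  rw [hT, LinearMap.add_apply, LinearMap.smul_apply, LinearMap.smul_apply, inner_add_right,
    inner_smul_right, inner_smul_right, Complex.add_re, Complex.re_ofReal_mul,
    Complex.re_ofReal_mul]
  exact hs (h₀.re_inner_mem hs hd₀ hx) (h₂.re_inner_mem hs hd₂ hx) hμ.1 (sub_nonneg.2 hμ.2)
    (add_sub_cancel _ _)

end Diag

section Matrix

variable {n : ℕ} {A : Matrix (Fin n) (Fin n) ℂ}

lemma diag_of_isHermitian (hA : A.IsHermitian) :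
    Diag A.toEuclideanLin hA.eigenvectorBasis hA.eigenvalues := fun i => by
  rw [toLpLin_apply, hA.mulVec_eigenvectorBasis]
  rfl

lemma diag_cfc (hA : A.IsHermitian) (f : ℝ → ℝ) :
    Diag (hA.cfc f).toEuclideanLin hA.eigenvectorBasis (f ∘ hA.eigenvalues) := fun i => by
  rw [toLpLin_apply, Matrix.IsHermitian.cfc, Unitary.conjStarAlgAut_apply, ← mulVec_mulVec,
    hA.star_eigenvectorUnitary_mulVec, ← mulVec_mulVec, diagonal_mulVec_single, mul_one,
    ← mul_one (((RCLike.ofReal ∘ f ∘ hA.eigenvalues) i : ℂ)), ← smul_eq_mul, Pi.single_smul,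
    mulVec_smul, hA.eigenvectorUnitary_mulVec]
  rfl

lemma inner_cfc_of_diag (hA : A.IsHermitian)
    {e : OrthonormalBasis (Fin n) ℂ (EuclideanSpace ℂ (Fin n))} {a : Fin n → ℝ}
    (h : Diag A.toEuclideanLin e a) (f : ℝ → ℝ) (w : EuclideanSpace ℂ (Fin n)) :
    ⟪w, (hA.cfc f).toEuclideanLin w⟫_ℂ = quadForm e a f w :=
  ((diag_of_isHermitian hA).comp_of_diag h (diag_cfc hA f)).inner_map_self w

end Matrix

end Diag

section QuadConvexOn

/-- Matrix convexity of order `n` on `s`, expressed by quadratic forms in eigenbases of operators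
rather than by the functional calculus of matrices. -/
def QuadConvexOn (n : ℕ) (s : Set ℝ) (f : ℝ → ℝ) : Prop :=
  ∀ (T₀ T₁ T₂ : EuclideanSpace ℂ (Fin n) →ₗ[ℂ] EuclideanSpace ℂ (Fin n))
    (e₀ e₁ e₂ : OrthonormalBasis (Fin n) ℂ (EuclideanSpace ℂ (Fin n))) (d₀ d₁ d₂ : Fin n → ℝ)
    (μ : ℝ), μ ∈ Icc (0 : ℝ) 1 → Diag T₀ e₀ d₀ → Diag T₁ e₁ d₁ → Diag T₂ e₂ d₂ →
    T₁ = (μ : ℂ) • T₀ + ((1 - μ : ℝ) : ℂ) • T₂ → (∀ i, d₀ i ∈ s) → (∀ i, d₂ i ∈ s) → ∀ w,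
    quadForm e₁ d₁ f w ≤ μ * quadForm e₀ d₀ f w + (1 - μ) * quadForm e₂ d₂ f w

lemma MatrixConvexOrder.quadConvexOn {n : ℕ} {α β : ℝ} {f : ℝ → ℝ}
    (hf : MatrixConvexOrder n α β f) : QuadConvexOn n (Ioo α β) f := by
  intro T₀ T₁ T₂ e₀ e₁ e₂ d₀ d₁ d₂ μ hμ h₀ h₁ h₂ hT hd₀ hd₂ w
  obtain ⟨A, rfl⟩ := toEuclideanLin.surjective T₀
  obtain ⟨B, rfl⟩ := toEuclideanLin.surjective T₂
  obtain rfl : T₁ = (μ • A + (1 - μ) • B).toEuclideanLin := by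
    rw [hT, map_add, ← Complex.coe_smul, ← Complex.coe_smul, map_smul, map_smul]
  have hA : A.IsHermitian := isSymmetric_toEuclideanLin_iff.1 h₀.isSymmetric
  have hB : B.IsHermitian := isSymmetric_toEuclideanLin_iff.1 h₂.isSymmetric
  have hC : (μ • A + (1 - μ) • B).IsHermitian := isSymmetric_toEuclideanLin_iff.1 h₁.isSymmetric
  have hpos := hf A B hA hB μ hμ hC
    (h₀.mem_of_diag (diag_of_isHermitian hA) (convex_Ioo α β) hd₀)
    (h₂.mem_of_diag (diag_of_isHermitian hB) (convex_Ioo α β) hd₂)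
  have h := (isPositive_toEuclideanLin_iff.2 hpos).re_inner_nonneg_right w
  rw [map_sub, map_add, ← Complex.coe_smul, ← Complex.coe_smul, map_smul, map_smul,
    LinearMap.sub_apply, LinearMap.add_apply, LinearMap.smul_apply, LinearMap.smul_apply,
    inner_sub_right, inner_add_right, inner_smul_right, inner_smul_right,
    inner_cfc_of_diag hA h₀, inner_cfc_of_diag hB h₂, inner_cfc_of_diag hC h₁] at h
  exact sub_nonneg.1 (mod_cast h)

variable {n : ℕ} {s : Set ℝ} {f : ℝ → ℝ}

lemma QuadConvexOn.convexOn (hf : QuadConvexOn n s f) (hn : 0 < n) (hs : Convex ℝ s) :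
    ConvexOn ℝ s f := by
  refine ⟨hs, fun x hx y hy μ ν hμ hν hμν => ?_⟩
  obtain rfl : ν = 1 - μ := by linarith
  let e := EuclideanSpace.basisFun (Fin n) ℂ
  have hdiag : ∀ c : ℝ, Diag ((c : ℂ) • LinearMap.id) e fun _ => c := fun _ _ => rfl
  have hquad : ∀ c : ℝ, quadForm e (fun _ => c) f (e ⟨0, hn⟩) = f c := fun c => by
    rw [quadForm, ← Finset.mul_sum, e.sum_sq_norm_inner_right, e.norm_eq_one, one_pow, mul_one]
  have h := hf _ _ _ e e e _ _ _ μ ⟨hμ, sub_nonneg.1 hν⟩ (hdiag x) (hdiag (μ * x + (1 - μ) * y))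
    (hdiag y) (by push_cast; module) (fun _ => hx) (fun _ => hy) (e ⟨0, hn⟩)
  simpa only [hquad, smul_eq_mul] using h

lemma QuadConvexOn.congr {t : Set ℝ} {g : ℝ → ℝ} (hf : QuadConvexOn n s f) (hts : t ⊆ s)
    (ht : Convex ℝ t) (hfg : EqOn f g t) : QuadConvexOn n t g := by
  intro T₀ T₁ T₂ e₀ e₁ e₂ d₀ d₁ d₂ μ hμ h₀ h₁ h₂ hT hd₀ hd₂ w
  have hd₁ := Diag.mem_of_eq_combination ht hμ h₀ h₁ h₂ hT hd₀ hd₂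
  rw [← quadForm_congr fun i => hfg (hd₀ i), ← quadForm_congr fun i => hfg (hd₁ i),
    ← quadForm_congr fun i => hfg (hd₂ i)]
  exact hf T₀ T₁ T₂ e₀ e₁ e₂ d₀ d₁ d₂ μ hμ h₀ h₁ h₂ hT (fun i => hts (hd₀ i))
    (fun i => hts (hd₂ i)) w

lemma QuadConvexOn.sub_const (hf : QuadConvexOn n s f) (c : ℝ) :
    QuadConvexOn n s fun t => f t - c := by
  intro T₀ T₁ T₂ e₀ e₁ e₂ d₀ d₁ d₂ μ hμ h₀ h₁ h₂ hT hd₀ hd₂ w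
  have h := hf T₀ T₁ T₂ e₀ e₁ e₂ d₀ d₁ d₂ μ hμ h₀ h₁ h₂ hT hd₀ hd₂ w
  simp only [quadForm, sub_mul, Finset.sum_sub_distrib, ← Finset.mul_sum,
    OrthonormalBasis.sum_sq_norm_inner_right] at h ⊢
  linarith

end QuadConvexOn

section DivDiffSqNonneg

/-- Nonnegativity of the divided differences of `f |q|²` of order `2n`, for all polynomials `q` of
degree less than `n`. For `n`-convex `f` this replaces the positivity of Kraus matrices, and it
makes sense without any smoothness of `f`. -/
def DivDiffSqNonneg (n : ℕ) (s : Set ℝ) (f : ℝ → ℝ) : Prop :=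
  ∀ q : ℂ[X], q.degree < n → ∀ S : Finset ℝ, ↑S ⊆ s → S.card = 2 * n + 1 →
    0 ≤ divDiff S fun t => f t * ‖q.eval (t : ℂ)‖ ^ 2

variable {n : ℕ} {f : ℝ → ℝ}

lemma exists_rankOne_path (n : ℕ) :
    ∃ (T : ℝ → EuclideanSpace ℂ (Fin n) →ₗ[ℂ] EuclideanSpace ℂ (Fin n))
      (e : ℝ → OrthonormalBasis (Fin n) ℂ (EuclideanSpace ℂ (Fin n))) (d : ℝ → Fin n → ℝ)
      (v : EuclideanSpace ℂ (Fin n)),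
      (∀ x, T x = T 0 + (x : ℂ) • (rankOne ℂ v v).toLinearMap) ∧
      (∀ x, Diag (T x) (e x) (d x)) ∧
      ∀ x y, 0 < x → 0 < y → x ≠ y → GenericRankOneUpdate (e x) (d x) (e y) (d y) (y - x) v := by
  let e₀ := EuclideanSpace.basisFun (Fin n) ℂ
  obtain ⟨T₀, hT₀⟩ := exists_diag_of_basis e₀ fun i : Fin n => (i : ℝ)
  let v : EuclideanSpace ℂ (Fin n) := ∑ i, (1 : ℂ) • e₀ i
  have hv : ∀ i, ⟪e₀ i, v⟫_ℂ ≠ 0 := fun i => by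
    rw [e₀.orthonormal.inner_right_fintype]
    exact one_ne_zero
  let T : ℝ → EuclideanSpace ℂ (Fin n) →ₗ[ℂ] EuclideanSpace ℂ (Fin n) := fun x =>
    T₀ + (x : ℂ) • (rankOne ℂ v v).toLinearMap
  choose e d h using fun x => exists_diag finrank_euclideanSpace_fin
    (isSymmetric_add_rankOne hT₀.isSymmetric x v)
  have hpos : ∀ x, 0 < x → GenericRankOneUpdate e₀ (fun i : Fin n => (i : ℝ)) (e x) (d x) x v :=
    fun x hx => hT₀.genericRankOneUpdate (h x) (add_rankOne_apply T₀ x v)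
      (Nat.cast_injective.comp Fin.val_injective) hv hx.ne'
  refine ⟨T, e, d, v, fun x => ?_, h, fun x y hx _ hxy => ?_⟩
  · simp only [T, Complex.ofReal_zero, zero_smul, add_zero]
  · refine (h x).genericRankOneUpdate (h y) (fun z => ?_) (hpos x hx).injective_right
      (hpos x hx).symm.inner_ne_zero (sub_ne_zero.2 hxy.symm)
    rw [add_rankOne_apply, add_rankOne_apply]
    push_cast
    module

lemma QuadConvexOn.sum_divDiff_nonneg {s : Set ℝ} (hf : QuadConvexOn n s f)
    {T₀ T₁ T₂ : EuclideanSpace ℂ (Fin n) →ₗ[ℂ] EuclideanSpace ℂ (Fin n)}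
    {e₀ e₁ e₂ : OrthonormalBasis (Fin n) ℂ (EuclideanSpace ℂ (Fin n))} {d₀ d₁ d₂ : Fin n → ℝ}
    {τ : ℝ} {v : EuclideanSpace ℂ (Fin n)} (hT : T₁ = (2 : ℂ)⁻¹ • (T₀ + T₂))
    (h₀ : Diag T₀ e₀ d₀) (h₁ : Diag T₁ e₁ d₁) (h₂ : Diag T₂ e₂ d₂) (hτ : 0 < τ)
    (h₀₁ : GenericRankOneUpdate e₀ d₀ e₁ d₁ τ v)
    (h₀₂ : GenericRankOneUpdate e₀ d₀ e₂ d₂ (2 * τ) v)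
    (h₁₂ : GenericRankOneUpdate e₁ d₁ e₂ d₂ τ v)
    (hd₀ : ∀ i, d₀ i ∈ s) (hd₂ : ∀ i, d₂ i ∈ s) {q : ℂ[X]} (hq : q.degree < n) :
    0 ≤ ∑ k, τ * ‖⟪e₂ k, v⟫_ℂ‖ ^ 2 *
      divDiff (insert (d₂ k) (Finset.univ.image d₀ ∪ Finset.univ.image d₁))
        fun x => f x * ‖q.eval (x : ℂ)‖ ^ 2 := by
  obtain ⟨w, rfl⟩ := h₀₁.exists_adjPoly_eq (p := q) (by rwa [Fintype.card_fin])
  rw [← h₀₁.quadForm_slope_sub h₀₂ h₁₂]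
  have hmid := hf T₀ T₁ T₂ e₀ e₁ e₂ d₀ d₁ d₂ 2⁻¹ (by norm_num) h₀ h₁ h₂
    (by rw [hT]; push_cast; module) hd₀ hd₂ w
  have hslope : (quadForm e₂ d₂ f w - quadForm e₀ d₀ f w) / (2 * τ) -
      (quadForm e₁ d₁ f w - quadForm e₀ d₀ f w) / τ =
      (2⁻¹ * quadForm e₀ d₀ f w + (1 - 2⁻¹) * quadForm e₂ d₂ f w - quadForm e₁ d₁ f w) / τ := by
    field_simp
    ring
  rw [hslope]
  exact div_nonneg (sub_nonneg.2 hmid) hτ.le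

lemma card_insert_image_union_image {ι : Type*} [Fintype ι]
    {E : Type*} [NormedAddCommGroup E] [InnerProductSpace ℂ E] {e₀ e₁ e₂ : OrthonormalBasis ι ℂ E}
    {d₀ d₁ d₂ : ι → ℝ} {τ₀₁ τ₀₂ τ₁₂ : ℝ} {v : E}
    (h₀₁ : GenericRankOneUpdate e₀ d₀ e₁ d₁ τ₀₁ v) (h₀₂ : GenericRankOneUpdate e₀ d₀ e₂ d₂ τ₀₂ v)
    (h₁₂ : GenericRankOneUpdate e₁ d₁ e₂ d₂ τ₁₂ v) (k : ι) :
    (insert (d₂ k) (Finset.univ.image d₀ ∪ Finset.univ.image d₁)).card =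
      2 * Fintype.card ι + 1 := by
  have hk : d₂ k ∉ Finset.univ.image d₀ ∪ Finset.univ.image d₁ := by
    simp [fun i => (h₀₂.ne i k).symm, fun i => (h₁₂.ne i k).symm]
  rw [Finset.card_insert_of_notMem hk, h₀₁.card_image_union_image]

lemma QuadConvexOn.exists_divDiff_nonneg {α β : ℝ} (hf : QuadConvexOn n (Ioo α β) f)
    (hn : 0 < n) (hαβ : α < β) {q : ℂ[X]} (hq : q.degree < n) :
    ∃ S : Finset ℝ, ↑S ⊆ Ioo α β ∧ S.card = 2 * n + 1 ∧
      0 ≤ divDiff S fun x => f x * ‖q.eval (x : ℂ)‖ ^ 2 := by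
  obtain ⟨T, e, d, v, hT, hd, hgen⟩ := exists_rankOne_path n
  obtain ⟨t, ht⟩ := nonempty_Ioo.2 hαβ
  obtain ⟨s, hs, hmem⟩ : ∃ s > 0, ∀ k ∈ ({1, 2, 3} : Finset ℝ), ∀ i, t + s * d k i ∈ Ioo α β := by
    have hev : ∀ᶠ s in 𝓝 (0 : ℝ), ∀ k ∈ ({1, 2, 3} : Finset ℝ), ∀ i, t + s * d k i ∈ Ioo α β := by
      refine (Filter.eventually_all_finset _).2 fun k _ => eventually_all.2 fun i => ?_
      have hcont : ContinuousAt (fun s => t + s * d k i) 0 := by fun_prop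
      exact hcont (by simpa using isOpen_Ioo.mem_nhds ht)
    obtain ⟨s, hs, hpos⟩ := ((hev.filter_mono nhdsWithin_le_nhds).and
      (self_mem_nhdsWithin (s := Ioi 0))).exists
    exact ⟨s, hpos, hs⟩
  simp only [Finset.mem_insert, Finset.mem_singleton, forall_eq_or_imp, forall_eq] at hmem
  obtain ⟨hm₁, hm₂, hm₃⟩ := hmem
  have h₁₂ := (hgen 1 2 one_pos two_pos (by norm_num)).affine t hs.ne'
  have h₁₃ := (hgen 1 3 one_pos three_pos (by norm_num)).affine t hs.ne'
  have h₂₃ := (hgen 2 3 two_pos three_pos (by norm_num)).affine t hs.ne'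
  have hsum := hf.sum_divDiff_nonneg (τ := s) (v := v)
    (by rw [hT 1, hT 2, hT 3]; push_cast; module)
    ((hd 1).affine t s) ((hd 2).affine t s) ((hd 3).affine t s) hs
    (by convert h₁₂ using 1; ring) (by convert h₁₃ using 1; ring) (by convert h₂₃ using 1; ring)
    hm₁ hm₃ hq
  obtain ⟨k, -, hk⟩ := Finset.exists_le_of_sum_le (f := fun _ : Fin n => (0 : ℝ))
    ⟨⟨0, hn⟩, Finset.mem_univ _⟩ (by simpa only [Finset.sum_const_zero] using hsum)
  refine ⟨_, ?_, (card_insert_image_union_image h₁₂ h₁₃ h₂₃ k).trans (by rw [Fintype.card_fin]),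
    nonneg_of_mul_nonneg_right hk
      (mul_pos hs (pow_pos (norm_pos_iff.2 (h₁₃.symm.inner_ne_zero k)) 2))⟩
  simp only [Finset.coe_insert, Finset.coe_union, Finset.coe_image, Finset.coe_univ, image_univ,
    insert_subset_iff, union_subset_iff, range_subset_iff]
  exact ⟨hm₃ k, hm₁, hm₂⟩

lemma contDiff_norm_eval_sq (q : ℂ[X]) (m : ℕ) :
    ContDiff ℝ m fun t : ℝ => ‖q.eval (t : ℂ)‖ ^ 2 := by
  have hq : ContDiff ℝ m fun z : ℂ => q.eval z :=
    (by simpa using q.contDiff_aeval (𝕜 := ℂ) (n := m) : ContDiff ℂ m fun z : ℂ => q.eval z)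
      |>.restrict_scalars ℝ
  exact (hq.comp Complex.ofRealCLM.contDiff).norm_sq ℝ

lemma QuadConvexOn.iteratedDeriv_nonneg {α β t : ℝ} (hf : QuadConvexOn n (Ioo α β) f)
    (hn : 0 < n) {q : ℂ[X]} (hq : q.degree < n)
    (hF : ContDiff ℝ (2 * n : ℕ) fun t => f t * ‖q.eval (t : ℂ)‖ ^ 2) (ht : t ∈ Ioo α β) :
    0 ≤ iteratedDeriv (2 * n) (fun t => f t * ‖q.eval (t : ℂ)‖ ^ 2) t := by
  by_contra! hneg
  have hnhds := Filter.inter_mem (isOpen_Ioo.mem_nhds ht)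
    ((hF.continuous_iteratedDeriv (2 * n) le_rfl).continuousAt.eventually_lt_const hneg)
  obtain ⟨α', β', ht', hsub⟩ := mem_nhds_iff_exists_Ioo_subset.1 hnhds
  obtain ⟨S, hS, hcard, hnonneg⟩ := (hf.congr (hsub.trans inter_subset_left) (convex_Ioo α' β')
    fun _ _ => rfl).exists_divDiff_nonneg hn (ht'.1.trans ht'.2) hq
  obtain ⟨ξ, hξ, heq⟩ := exists_iteratedDeriv_eq_factorial_mul_divDiff hF hS hcard
  have hlt : iteratedDeriv (2 * n) (fun t => f t * ‖q.eval (t : ℂ)‖ ^ 2) ξ < 0 := (hsub hξ).2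
  rw [heq] at hlt
  exact hlt.not_ge (by positivity)

theorem QuadConvexOn.divDiffSqNonneg_of_contDiff {α β : ℝ} (hf : QuadConvexOn n (Ioo α β) f)
    (hn : 0 < n) (hs : ContDiff ℝ (2 * n : ℕ) f) : DivDiffSqNonneg n (Ioo α β) f := by
  intro q hq S hS hcard
  have hF := hs.mul (contDiff_norm_eval_sq q (2 * n))
  obtain ⟨ξ, hξ, heq⟩ := exists_iteratedDeriv_eq_factorial_mul_divDiff hF hS hcard
  exact nonneg_of_mul_nonneg_right (heq ▸ hf.iteratedDeriv_nonneg hn hq hF hξ)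
    (mod_cast Nat.factorial_pos (2 * n))

end DivDiffSqNonneg

section Mollify

open MeasureTheory Convolution

variable {n : ℕ} {α β : ℝ} {f : ℝ → ℝ}

lemma integrable_normed_mul (φ : ContDiffBump (0 : ℝ)) (hf : Continuous f) (x : ℝ) :
    Integrable fun y => φ.normed volume y * f (x - y) :=
  (φ.continuous_normed.mul (by fun_prop)).integrable_of_hasCompactSupport
    φ.hasCompactSupport_normed.mul_right

section QuadForm

variable {ι : Type*} [Fintype ι] {E : Type*} [NormedAddCommGroup E] [InnerProductSpace ℂ E]
  (φ : ContDiffBump (0 : ℝ)) (e : OrthonormalBasis ι ℂ E) (d : ι → ℝ) (w : E)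

lemma integrable_normed_mul_quadForm (hf : Continuous f) :
    Integrable fun y => φ.normed volume y * quadForm e (fun i => d i - y) f w := by
  simp only [quadForm, Finset.mul_sum, ← mul_assoc]
  exact integrable_finsetSum _ fun i _ => (integrable_normed_mul φ hf _).mul_const _

lemma quadForm_convolution (hf : Continuous f) :
    quadForm e d (φ.normed volume ⋆ f) w =
      ∫ y, φ.normed volume y * quadForm e (fun i => d i - y) f w := by
  simp only [quadForm, Finset.mul_sum, ← mul_assoc]
  rw [integral_finsetSum _ fun i _ => (integrable_normed_mul φ hf _).mul_const _]
  exact Finset.sum_congr rfl fun i _ => by rw [integral_mul_const]; rfl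

end QuadForm

lemma QuadConvexOn.convolution (hf : QuadConvexOn n (Ioo α β) f) (hc : Continuous f)
    (φ : ContDiffBump (0 : ℝ)) :
    QuadConvexOn n (Ioo (α + φ.rOut) (β - φ.rOut)) (φ.normed volume ⋆ f) := by
  intro T₀ T₁ T₂ e₀ e₁ e₂ d₀ d₁ d₂ μ hμ h₀ h₁ h₂ hT hd₀ hd₂ w
  have hint := fun e (d : Fin n → ℝ) => integrable_normed_mul_quadForm φ e d w hc
  rw [quadForm_convolution φ e₀ d₀ w hc, quadForm_convolution φ e₁ d₁ w hc,
    quadForm_convolution φ e₂ d₂ w hc, ← integral_const_mul, ← integral_const_mul,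
    ← integral_add ((hint e₀ d₀).const_mul _) ((hint e₂ d₂).const_mul _)]
  refine integral_mono (hint e₁ d₁) (((hint e₀ d₀).const_mul _).add ((hint e₂ d₂).const_mul _))
    fun y => ?_
  by_cases hy : φ.normed volume y = 0
  · simp [hy]
  have hball : y ∈ Function.support (φ.normed volume) := hy
  rw [φ.support_normed_eq, mem_ball_zero_iff, Real.norm_eq_abs, abs_lt] at hball
  have hmem : ∀ {t}, t ∈ Ioo (α + φ.rOut) (β - φ.rOut) → t - y ∈ Ioo α β := fun ht =>
    ⟨by linarith [ht.1, hball.2], by linarith [ht.2, hball.1]⟩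
  have hshift : ∀ {T : EuclideanSpace ℂ (Fin n) →ₗ[ℂ] EuclideanSpace ℂ (Fin n)}
      {e : OrthonormalBasis (Fin n) ℂ (EuclideanSpace ℂ (Fin n))} {d : Fin n → ℝ}, Diag T e d →
      Diag (((-y : ℝ) : ℂ) • LinearMap.id + ((1 : ℝ) : ℂ) • T) e fun i => d i - y :=
    fun h => by simpa only [one_mul, neg_add_eq_sub] using h.affine (-y) 1
  have hquad := hf _ _ _ e₀ e₁ e₂ _ _ _ μ hμ (hshift h₀) (hshift h₁) (hshift h₂)
    (by rw [hT]; push_cast; module) (fun i => hmem (hd₀ i)) (fun i => hmem (hd₂ i)) w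
  calc φ.normed volume y * quadForm e₁ (fun i => d₁ i - y) f w
      ≤ φ.normed volume y * (μ * quadForm e₀ (fun i => d₀ i - y) f w +
          (1 - μ) * quadForm e₂ (fun i => d₂ i - y) f w) :=
        mul_le_mul_of_nonneg_left hquad (φ.nonneg_normed y)
    _ = _ := by ring

lemma QuadConvexOn.divDiffSqNonneg_of_continuous (hf : QuadConvexOn n (Ioo α β) f) (hn : 0 < n)
    (hc : Continuous f) : DivDiffSqNonneg n (Ioo α β) f := by
  intro q hq S hS hcard
  let φ : ℕ → ContDiffBump (0 : ℝ) := fun i =>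
    { rIn := 1 / (i + 1 : ℝ) / 2
      rOut := 1 / (i + 1 : ℝ)
      rIn_pos := by positivity
      rIn_lt_rOut := half_lt_self (by positivity) }
  have hφ : Tendsto (fun i => (φ i).rOut) atTop (𝓝 0) := tendsto_one_div_add_atTop_nhds_zero_nat
  have hlim := tendsto_divDiff (S := S) fun x _ =>
    (ContDiffBump.convolution_tendsto_right_of_continuous (μ := volume) hφ hc x).mul_const
      (‖q.eval (x : ℂ)‖ ^ 2)
  have hmem : ∀ᶠ i in atTop, ∀ x ∈ S, x ∈ Ioo (α + (φ i).rOut) (β - (φ i).rOut) := by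
    refine (Filter.eventually_all_finset S).2 fun x hx => ?_
    filter_upwards [hφ.eventually_lt_const (sub_pos.2 (hS hx).1),
      hφ.eventually_lt_const (sub_pos.2 (hS hx).2)] with i hα hβ
    exact ⟨lt_sub_iff_add_lt'.1 hα, lt_sub_comm.1 hβ⟩
  refine ge_of_tendsto hlim ?_
  filter_upwards [hmem] with i hi
  exact (hf.convolution hc (φ i)).divDiffSqNonneg_of_contDiff hn
    ((φ i).hasCompactSupport_normed.contDiff_convolution_left _ (φ i).contDiff_normed
      hc.locallyIntegrable) q hq S hi hcard

theorem QuadConvexOn.divDiffSqNonneg (hf : QuadConvexOn n (Ioo α β) f) (hn : 0 < n) :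
    DivDiffSqNonneg n (Ioo α β) f := by
  intro q hq S hS hcard
  have hne : S.Nonempty := Finset.card_pos.1 (by lia)
  obtain ⟨α', hα, hα'⟩ := exists_between (hS (S.min'_mem hne)).1
  obtain ⟨β', hβ', hβ⟩ := exists_between (hS (S.max'_mem hne)).2
  have hS' : ↑S ⊆ Ioo α' β' := fun x hx =>
    ⟨hα'.trans_le (S.min'_le x hx), (S.le_max' x hx).trans_lt hβ'⟩
  have hle : α' ≤ β' := ((hS' (S.min'_mem hne)).1.trans (hS' (S.min'_mem hne)).2).le
  have hcont : ContinuousOn f (Icc α' β') :=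
    ((hf.convexOn hn (convex_Ioo α β)).continuousOn isOpen_Ioo).mono
      (Icc_subset_Ioo hα hβ)
  have heq : EqOn f (IccExtend hle fun t => f t) (Icc α' β') := fun t ht =>
    (IccExtend_of_mem hle (fun t => f t) ht).symm
  have hext := (hf.congr (Ioo_subset_Ioo hα.le hβ.le) (convex_Ioo α' β')
    (heq.mono Ioo_subset_Icc_self)).divDiffSqNonneg_of_continuous hn
      hcont.domRestrict.Icc_extend'
  rw [divDiff_congr fun x hx => by rw [heq (Ioo_subset_Icc_self (hS' hx))]]
  exact hext q hq S hS' hcard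

end Mollify

section Differentiable

lemma disjoint_one_two_of_neg {T : Finset ℝ} (hneg : ∀ y ∈ T, y < 0) :
    Disjoint ({1, 2} : Finset ℝ) T := by
  rw [Finset.disjoint_insert_left, Finset.disjoint_singleton_left]
  exact ⟨fun h => by linarith [hneg 1 h], fun h => by linarith [hneg 2 h]⟩

lemma divDiff_one_two_union_neg {T : Finset ℝ} (hT : T.Nonempty) (hneg : ∀ y ∈ T, y < 0) :
    divDiff ({1, 2} ∪ T) (fun x => if 0 < x then 1 else 0) < 0 := by
  have hT0 : ∑ x ∈ T, (if 0 < x then (1 : ℝ) else 0) /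
      ((∏ y ∈ T.erase x, (x - y)) * ∏ y ∈ {1, 2}, (x - y)) = 0 :=
    Finset.sum_eq_zero fun x hx => by rw [if_neg (hneg x hx).not_gt, zero_div]
  have hpos : 0 < ∏ y ∈ T, (1 - y) := Finset.prod_pos fun y hy => by linarith [hneg y hy]
  have hlt : ∏ y ∈ T, (1 - y) < ∏ y ∈ T, (2 - y) :=
    Finset.prod_lt_prod_of_nonempty (fun y hy => by linarith [hneg y hy])
      (fun y _ => by linarith) hT
  have h12 : ({1, 2} : Finset ℝ).erase 1 = {2} := by simp
  have h21 : ({1, 2} : Finset ℝ).erase 2 = {1} := by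
    rw [Finset.pair_comm]
    simp
  rw [divDiff_union (disjoint_one_two_of_neg hneg), hT0, Finset.sum_pair (by norm_num), h12, h21,
    Finset.prod_singleton, Finset.prod_singleton, if_pos one_pos, if_pos two_pos,
    show (1 : ℝ) - 2 = -1 by norm_num, show (2 : ℝ) - 1 = 1 by norm_num, one_mul, neg_one_mul,
    div_neg]
  linarith [one_div_lt_one_div_of_lt hpos hlt]

lemma exists_divDiff_max_zero_neg {m : ℕ} (hm : 4 ≤ m) :
    ∃ S : Finset ℝ, S.card = m ∧ divDiff S (fun x => max x 0) < 0 := by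
  obtain ⟨T, hTneg, hTcard⟩ := (Iio_infinite (0 : ℝ)).exists_subset_card_eq (m - 3)
  replace hTneg : ∀ y ∈ T, y < 0 := fun y hy => hTneg hy
  have h0 : (0 : ℝ) ∉ {1, 2} ∪ T := by simpa using fun h => (hTneg 0 h).false
  have hmax : ∀ x : ℝ, max x 0 = (if 0 < x then 1 else 0) * (x - 0) := fun x => by
    split_ifs with hx
    · rw [max_eq_left hx.le, one_mul, sub_zero]
    · rw [max_eq_right (not_lt.1 hx), zero_mul]
  refine ⟨insert 0 ({1, 2} ∪ T), ?_, ?_⟩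
  · rw [Finset.card_insert_of_notMem h0,
      Finset.card_union_of_disjoint (disjoint_one_two_of_neg hTneg),
      Finset.card_pair (by norm_num), hTcard]
    lia
  · rw [divDiff_congr fun x _ => hmax x, divDiff_insert_mul_sub h0]
    exact divDiff_one_two_union_neg (Finset.card_pos.1 (by lia)) hTneg

variable {f : ℝ → ℝ} {t L R : ℝ}

lemma tendsto_slope_rescale (hL : HasDerivWithinAt f L (Iic t) t)
    (hR : HasDerivWithinAt f R (Ici t) t) (x : ℝ) :
    Tendsto (slope (fun s => f (t + s * x)) 0) (𝓝[>] 0) (𝓝 (L * x + (R - L) * max x 0)) := by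
  have hline : HasDerivWithinAt (fun s : ℝ => t + s * x) x (Ioi 0) 0 := by
    simpa using ((hasDerivAt_id (0 : ℝ)).mul_const x).const_add t |>.hasDerivWithinAt
  have ht : t + 0 * x = t := by rw [zero_mul, add_zero]
  rw [← hasDerivWithinAt_iff_tendsto_slope' self_notMem_Ioi]
  rcases le_total 0 x with hx | hx
  · rw [max_eq_left hx, ← add_mul, add_sub_cancel]
    refine HasDerivWithinAt.comp 0 (s' := Ici t) (by rwa [ht]) hline fun s hs => ?_
    exact le_add_of_nonneg_right (mul_nonneg (le_of_lt hs) hx)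
  · rw [max_eq_right hx, mul_zero, add_zero]
    refine HasDerivWithinAt.comp 0 (s' := Iic t) (by rwa [ht]) hline fun s hs => ?_
    exact add_le_of_nonpos_right (mul_nonpos_of_nonneg_of_nonpos (le_of_lt hs) hx)

lemma divDiff_slope_rescale {S : Finset ℝ} (hS : 1 < S.card) {s : ℝ} (hs : s ≠ 0) :
    divDiff S (fun x => slope (fun s => f (t + s * x)) 0 s) =
      s ^ (S.card - 2) * divDiff (S.image fun x => t + s * x) f := by
  have hconst : divDiff S (fun _ => f t) = 0 := by
    have hdeg : (C (f t)).degree < S.card := degree_C_le.trans_lt (mod_cast by lia)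
    simpa only [eval_C, coeff_C_of_ne_zero (Nat.sub_ne_zero_of_lt hS)] using divDiff_eval hdeg
  simp only [slope, sub_zero, zero_mul, add_zero, vsub_eq_sub, smul_eq_mul]
  rw [divDiff_const_mul, divDiff_sub, hconst, sub_zero, divDiff_image_affine hs,
    show S.card - 1 = S.card - 2 + 1 by lia, pow_succ]
  field_simp

lemma rightDeriv_le_leftDeriv_of_divDiff_nonneg {m : ℕ} (hm : 4 ≤ m) {U : Set ℝ} (hU : U ∈ 𝓝 t)
    (hf : ∀ S : Finset ℝ, ↑S ⊆ U → S.card = m → 0 ≤ divDiff S f)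
    (hL : HasDerivWithinAt f L (Iic t) t) (hR : HasDerivWithinAt f R (Ici t) t) : R ≤ L := by
  obtain ⟨S, rfl, hneg⟩ := exists_divDiff_max_zero_neg hm
  have hlinear : divDiff S (fun x => L * x) = 0 := by
    have hdeg : (C L * X : ℝ[X]).degree < (S.card : WithBot ℕ) :=
      (degree_C_mul_X_le L).trans_lt (mod_cast by lia)
    simpa only [eval_mul, eval_C, eval_X, coeff_C_mul,
      coeff_X_of_ne_one (show S.card - 1 ≠ 1 by lia), mul_zero] using divDiff_eval hdeg
  have hmem : ∀ᶠ s in 𝓝[>] (0 : ℝ), ∀ x ∈ S, t + s * x ∈ U := by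
    refine (Filter.eventually_all_finset S).2 fun x _ => nhdsWithin_le_nhds ?_
    have hcont : ContinuousAt (fun s : ℝ => t + s * x) 0 := by fun_prop
    exact hcont (by simpa using hU)
  have hlim : 0 ≤ divDiff S fun x => L * x + (R - L) * max x 0 := by
    refine ge_of_tendsto (tendsto_divDiff fun x _ => tendsto_slope_rescale hL hR x) ?_
    filter_upwards [hmem, self_mem_nhdsWithin] with s hs (hpos : 0 < s)
    have hinj : Function.Injective fun x => t + s * x :=
      (add_right_injective t).comp (mul_right_injective₀ hpos.ne')
    rw [divDiff_slope_rescale (by lia) hpos.ne']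
    refine mul_nonneg (pow_nonneg hpos.le _) (hf _ ?_ (Finset.card_image_of_injective _ hinj))
    simpa [Set.subset_def] using hs
  have hsplit : divDiff S (fun x => L * x + (R - L) * max x 0) =
      (R - L) * divDiff S fun x => max x 0 := by
    rw [← divDiff_const_mul, ← sub_zero (divDiff S fun x => L * x + (R - L) * max x 0), ← hlinear,
      ← divDiff_sub]
    simp only [add_sub_cancel_left]
  exact sub_nonpos.1 (nonpos_of_mul_nonneg_left (hsplit ▸ hlim) hneg)

theorem differentiableAt_of_convexOn_of_divDiff_nonneg {U : Set ℝ} (hf : ConvexOn ℝ U f)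
    (hU : U ∈ 𝓝 t) {m : ℕ} (hm : 4 ≤ m)
    (hdiv : ∀ S : Finset ℝ, ↑S ⊆ U → S.card = m → 0 ≤ divDiff S f) : DifferentiableAt ℝ f t := by
  have ht : t ∈ interior U := mem_interior_iff_mem_nhds.2 hU
  have hR := hasDerivWithinAt_Ioi_iff_Ici.1 (hf.hasDerivWithinAt_rightDeriv_of_mem_interior ht)
  have hL := hasDerivWithinAt_Iio_iff_Iic.1 (hf.hasDerivWithinAt_leftDeriv_of_mem_interior ht)
  rw [(rightDeriv_le_leftDeriv_of_divDiff_nonneg hm hU hdiv hL hR).antisymm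
    (hf.leftDeriv_le_rightDeriv_of_mem_interior ht)] at hR
  have hunion := hL.union hR
  rw [Iic_union_Ici, hasDerivWithinAt_univ] at hunion
  exact hunion.differentiableAt

end Differentiable

section Monotone

variable {n : ℕ} {α β c : ℝ} {s : Set ℝ} {f : ℝ → ℝ}

lemma QuadConvexOn.differentiableOn (hf : QuadConvexOn n (Ioo α β) f) (hn : 2 ≤ n) :
    DifferentiableOn ℝ f (Ioo α β) := fun x hx =>
  (differentiableAt_of_convexOn_of_divDiff_nonneg (m := 2 * n + 1)
    (hf.convexOn (by lia) (convex_Ioo α β)) (isOpen_Ioo.mem_nhds hx) (by lia) fun S hS hcard => by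
      have hdeg : (1 : ℂ[X]).degree < n := degree_one.trans_lt (mod_cast by lia)
      simpa using hf.divDiffSqNonneg (by lia) 1 hdeg S hS hcard).differentiableWithinAt

lemma DivDiffSqNonneg.quadForm_slope_le {z : ℝ} (hf : DivDiffSqNonneg n s fun t => f t - f z)
    {e u : OrthonormalBasis (Fin n) ℂ (EuclideanSpace ℂ (Fin n))} {a b : Fin n → ℝ}
    {v : EuclideanSpace ℂ (Fin n)} (h : GenericRankOneUpdate e a u b 1 v)
    (has : ∀ i, a i ∈ s) (hbs : ∀ i, b i ∈ s) (hz : z ∈ s)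
    (hz' : z ∉ Finset.univ.image a ∪ Finset.univ.image b) (w : EuclideanSpace ℂ (Fin n)) :
    quadForm e a (slope f z) w ≤ quadForm u b (slope f z) w := by
  have hslope : ∀ x, slope f z x * ‖(adjPoly e a v w).eval (x : ℂ)‖ ^ 2 * (x - z) =
      (f x - f z) * ‖(adjPoly e a v w).eval (x : ℂ)‖ ^ 2 := fun x => by
    rw [← vsub_eq_sub (f x), ← sub_smul_slope f z x, smul_eq_mul]
    ring
  rw [← sub_nonneg, h.quadForm_sub, one_mul, ← divDiff_insert_mul_sub hz',
    divDiff_congr fun x _ => hslope x]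
  refine hf _ ((degree_adjPoly_lt e a v w).trans_eq (by simp)) _ ?_ ?_
  · simpa [insert_subset_iff, range_subset_iff] using ⟨hz, has, hbs⟩
  · rw [Finset.card_insert_of_notMem hz', h.card_image_union_image, Fintype.card_fin]

lemma tendsto_slope_dslope (hf : DifferentiableAt ℝ f c) (x : ℝ) :
    Tendsto (fun z => slope f z x) (𝓝[≠] c) (𝓝 (dslope f c x)) := by
  rcases eq_or_ne x c with rfl | hxc
  · simpa only [dslope_same, slope_comm f _ x] using hasDerivAt_iff_tendsto_slope.1 hf.hasDerivAt
  · rw [dslope_of_ne f hxc]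
    have hcont : ContinuousAt (fun z => slope f z x) c := by
      simp only [slope_def_field]
      exact (continuousAt_const.sub hf.continuousAt).div (by fun_prop) (sub_ne_zero.2 hxc)
    exact hcont.tendsto.mono_left nhdsWithin_le_nhds

lemma QuadConvexOn.quadForm_dslope_le (hf : QuadConvexOn n (Ioo α β) f) (hn : 2 ≤ n)
    {e u : OrthonormalBasis (Fin n) ℂ (EuclideanSpace ℂ (Fin n))} {a b : Fin n → ℝ}
    {v : EuclideanSpace ℂ (Fin n)} (h : GenericRankOneUpdate e a u b 1 v)
    (ha : ∀ i, a i ∈ Ioo α β) (hb : ∀ i, b i ∈ Ioo α β) (hc : c ∈ Ioo α β)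
    (w : EuclideanSpace ℂ (Fin n)) :
    quadForm e a (dslope f c) w ≤ quadForm u b (dslope f c) w := by
  have hd := (hf.differentiableOn hn).differentiableAt (isOpen_Ioo.mem_nhds hc)
  have hlim : ∀ (e : OrthonormalBasis (Fin n) ℂ (EuclideanSpace ℂ (Fin n))) (a : Fin n → ℝ),
      Tendsto (fun z => quadForm e a (slope f z) w) (𝓝[≠] c) (𝓝 (quadForm e a (dslope f c) w)) :=
    fun e a => tendsto_finsetSum _ fun i _ =>
      (tendsto_slope_dslope hd (a i)).mul_const _
  refine le_of_tendsto_of_tendsto (hlim e a) (hlim u b) ?_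
  filter_upwards [nhdsWithin_le_nhds (isOpen_Ioo.mem_nhds hc), (nhdsNE_le_cofinite c)
    (Finset.eventually_cofinite_notMem _)] with z hz hz'
  exact ((hf.sub_const (f z)).divDiffSqNonneg (by lia)).quadForm_slope_le h ha hb hz hz' w

end Monotone

section LoewnerOrder

open scoped MatrixOrder Matrix.Norms.L2Operator

variable {n : ℕ} {A B C : Matrix (Fin n) (Fin n) ℂ} {s U : Set ℝ} {f : ℝ → ℝ}
  {e u : OrthonormalBasis (Fin n) ℂ (EuclideanSpace ℂ (Fin n))} {a b : Fin n → ℝ}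

lemma spectrum_subset_iff (hA : A.IsHermitian) : spectrum ℝ A ⊆ s ↔ ∀ i, hA.eigenvalues i ∈ s := by
  rw [hA.spectrum_real_eq_range_eigenvalues, range_subset_iff]

lemma Diag.mem_spectrum (h : Diag A.toEuclideanLin e a) (i : Fin n) : a i ∈ spectrum ℝ A := by
  rw [← spectrum.algebraMap_mem_iff ℂ, ← spectrum_toLpLin 2]
  exact (Module.End.hasEigenvalue_of_hasEigenvector
    ⟨Module.End.mem_eigenspace_iff.2 (h i), e.orthonormal.ne_zero i⟩).mem_spectrum

lemma le_iff_re_inner_le (hA : A.IsHermitian) (hB : B.IsHermitian) :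
    A ≤ B ↔ ∀ w, (⟪w, A.toEuclideanLin w⟫_ℂ).re ≤ (⟪w, B.toEuclideanLin w⟫_ℂ).re := by
  rw [Matrix.le_iff, ← isPositive_toEuclideanLin_iff, LinearMap.IsPositive,
    and_iff_right (isSymmetric_toEuclideanLin_iff.2 (hB.sub hA))]
  refine forall_congr' fun w => ?_
  rw [inner_re_symm, map_sub, LinearMap.sub_apply, inner_sub_right, map_sub, sub_nonneg,
    RCLike.re_to_complex, RCLike.re_to_complex]

lemma cfc_le_cfc_iff (hA : Diag A.toEuclideanLin e a) (hB : Diag B.toEuclideanLin u b) :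
    cfc f A ≤ cfc f B ↔ ∀ w, quadForm e a f w ≤ quadForm u b f w := by
  have hA' := isSymmetric_toEuclideanLin_iff.1 hA.isSymmetric
  have hB' := isSymmetric_toEuclideanLin_iff.1 hB.isSymmetric
  rw [le_iff_re_inner_le (cfc_predicate f A) (cfc_predicate f B), hA'.cfc_eq, hB'.cfc_eq]
  simp only [inner_cfc_of_diag hA' hA, inner_cfc_of_diag hB' hB, Complex.ofReal_re]

lemma spectrum_subset_of_le_of_le (hs : s.OrdConnected) (hA : A.IsHermitian) (hB : B.IsHermitian)
    (hAC : A ≤ C) (hCB : C ≤ B) (hAs : spectrum ℝ A ⊆ s) (hBs : spectrum ℝ B ⊆ s) :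
    spectrum ℝ C ⊆ s := by
  have hC : C.IsHermitian := add_sub_cancel A C ▸ hA.add (Matrix.le_iff.1 hAC).isHermitian
  rw [spectrum_subset_iff hA] at hAs
  rw [spectrum_subset_iff hB] at hBs
  rw [spectrum_subset_iff hC]
  exact (diag_of_isHermitian hC).mem_of_re_inner_mem fun x hx =>
    hs.out ((diag_of_isHermitian hA).re_inner_mem hs.convex hAs hx)
      ((diag_of_isHermitian hB).re_inner_mem hs.convex hBs hx)
      ⟨(le_iff_re_inner_le hA hC).1 hAC x, (le_iff_re_inner_le hC hB).1 hCB x⟩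

lemma eventually_spectrum_subset (hU : IsOpen U) (hA : spectrum ℝ A ⊆ U) :
    ∀ᶠ B in 𝓝 A, spectrum ℝ B ⊆ U :=
  upperHemicontinuousAt_iff_forall_isOpen.1 (upperHemicontinuous_spectrum ℝ _ A) U hU hA

lemma tendsto_cfc {X : Type*} {l : Filter X} {M : X → Matrix (Fin n) (Fin n) ℂ}
    (hU : IsOpen U) (hf : ContinuousOn f U) (hM : ∀ x, (M x).IsHermitian) (hA : A.IsHermitian)
    (hAU : spectrum ℝ A ⊆ U) (h : Tendsto M l (𝓝 A)) :
    Tendsto (fun x => cfc f (M x)) l (𝓝 (cfc f A)) := by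
  have hcont : ContinuousOn (cfc f)
      {B : Matrix (Fin n) (Fin n) ℂ | B.IsHermitian ∧ spectrum ℝ B ⊆ U} :=
    ContinuousOn.cfc_of_mem_nhdsSet f (hU.mem_nhdsSet.2 (iUnion₂_subset fun _ hB => hB.2))
      continuousOn_id fun _ hB => hB.1
  refine (hcont A ⟨hA, hAU⟩).tendsto.comp (tendsto_nhdsWithin_iff.2 ⟨h, ?_⟩)
  filter_upwards [h.eventually (eventually_spectrum_subset hU hAU)] with x hx using ⟨hM x, hx⟩

end LoewnerOrder

section RankOnePerturbation

open scoped MatrixOrder Matrix.Norms.L2Operator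

variable {n : ℕ} {A : Matrix (Fin n) (Fin n) ℂ} {U : Set ℝ} {f : ℝ → ℝ}
  {v : EuclideanSpace ℂ (Fin n)}

lemma toEuclideanLin_vecMulVec (v : EuclideanSpace ℂ (Fin n)) :
    (vecMulVec v (star v.ofLp)).toEuclideanLin = (rankOne ℂ v v).toLinearMap := by
  rw [← LinearEquiv.eq_symm_apply, symm_toEuclideanLin_rankOne]

lemma eventually_injective_add_mul (a : Fin n → ℝ) :
    ∀ᶠ δ : ℝ in cofinite, Function.Injective fun i : Fin n => a i + δ * i := by
  have hsub : ∀ i j, i ≠ j → {δ : ℝ | a i + δ * i = a j + δ * j}.Subsingleton := by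
    intro i j hij δ hδ ε hε
    have hne : (i : ℝ) - j ≠ 0 := sub_ne_zero.2 (mod_cast Fin.val_ne_of_ne hij)
    exact mul_right_cancel₀ hne (by linarith [mem_ofPred_eq ▸ hδ, mem_ofPred_eq ▸ hε])
  have hne : ∀ᶠ δ : ℝ in cofinite, ∀ i j, i ≠ j → a i + δ * i ≠ a j + δ * j :=
    eventually_all.2 fun i => eventually_all.2 fun j => eventually_imp_distrib_left.2 fun hij =>
      (hsub i j hij).finite.eventually_cofinite_notMem
  exact hne.mono fun δ hδ i j hij => by_contra fun h => hδ i j h hij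

lemma eventually_inner_add_smul_sum_ne_zero
    (e : OrthonormalBasis (Fin n) ℂ (EuclideanSpace ℂ (Fin n))) (v : EuclideanSpace ℂ (Fin n)) :
    ∀ᶠ δ : ℝ in cofinite, ∀ i, ⟪e i, v + (δ : ℂ) • ∑ j, e j⟫_ℂ ≠ 0 := by
  refine eventually_all.2 fun i => ?_
  have hsub : {δ : ℝ | ⟪e i, v + (δ : ℂ) • ∑ j, e j⟫_ℂ = 0}.Subsingleton := fun δ hδ ε hε => by
    simp only [mem_ofPred_eq, inner_add_right, inner_smul_right, inner_sum, e.inner_eq_ite,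
      Finset.sum_ite_eq, Finset.mem_univ, if_true, mul_one] at hδ hε
    exact_mod_cast add_left_cancel (hδ.trans hε.symm)
  exact hsub.finite.eventually_cofinite_notMem

lemma exists_generic_perturbation (hA : A.IsHermitian) (v : EuclideanSpace ℂ (Fin n)) :
    ∃ (M : ℝ → Matrix (Fin n) (Fin n) ℂ) (V : ℝ → EuclideanSpace ℂ (Fin n)) (e : _)
      (a : ℝ → Fin n → ℝ), Continuous M ∧ Continuous V ∧ M 0 = A ∧ V 0 = v ∧
      (∀ δ, Diag (M δ).toEuclideanLin e (a δ)) ∧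
      ∀ᶠ δ in 𝓝[≠] 0, Function.Injective (a δ) ∧ ∀ i, ⟪e i, V δ⟫_ℂ ≠ 0 := by
  let e := hA.eigenvectorBasis
  obtain ⟨T, hT⟩ := exists_diag_of_basis e fun i => (i : ℝ)
  obtain ⟨D, rfl⟩ := toEuclideanLin.surjective T
  refine ⟨fun δ => A + (δ : ℂ) • D, fun δ => v + (δ : ℂ) • ∑ i, e i, e,
    fun δ i => hA.eigenvalues i + δ * i, by fun_prop, by fun_prop, by simp, by simp,
    fun δ i => ?_, ?_⟩
  · rw [map_add, map_smul, LinearMap.add_apply, LinearMap.smul_apply, hT i,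
      diag_of_isHermitian hA i, smul_smul, ← add_smul]
    push_cast
    rfl
  · exact ((eventually_injective_add_mul _).and
      (eventually_inner_add_smul_sum_ne_zero e v)).filter_mono (nhdsNE_le_cofinite 0)

lemma cfc_le_cfc_add_vecMulVec (hU : IsOpen U) (hf : ContinuousOn f U)
    (hgen : ∀ (e u : OrthonormalBasis (Fin n) ℂ (EuclideanSpace ℂ (Fin n))) (a b : Fin n → ℝ)
      (v : EuclideanSpace ℂ (Fin n)), GenericRankOneUpdate e a u b 1 v → (∀ i, a i ∈ U) →
      (∀ i, b i ∈ U) → ∀ w, quadForm e a f w ≤ quadForm u b f w)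
    (hA : A.IsHermitian) (hAU : spectrum ℝ A ⊆ U)
    (hBU : spectrum ℝ (A + vecMulVec v (star v.ofLp)) ⊆ U) :
    cfc f A ≤ cfc f (A + vecMulVec v (star v.ofLp)) := by
  obtain ⟨M, V, e, a, hM, hV, rfl, rfl, hdiag, hev⟩ := exists_generic_perturbation hA v
  let N : ℝ → Matrix (Fin n) (Fin n) ℂ := fun δ => M δ + vecMulVec (V δ) (star (V δ).ofLp)
  have hMh : ∀ δ, (M δ).IsHermitian := fun δ =>
    isSymmetric_toEuclideanLin_iff.1 (hdiag δ).isSymmetric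
  have hNh : ∀ δ, (N δ).IsHermitian := fun δ =>
    (hMh δ).add (posSemidef_vecMulVec_self_star _).isHermitian
  have hMlim : Tendsto M (𝓝[≠] 0) (𝓝 (M 0)) := hM.continuousAt.tendsto.mono_left nhdsWithin_le_nhds
  have hNlim : Tendsto N (𝓝[≠] 0) (𝓝 (N 0)) :=
    (show Continuous N by fun_prop).continuousAt.tendsto.mono_left nhdsWithin_le_nhds
  refine le_of_tendsto_of_tendsto (tendsto_cfc hU hf hMh hA hAU hMlim)
    (tendsto_cfc hU hf hNh (hNh 0) hBU hNlim) ?_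
  filter_upwards [hev, hMlim.eventually (eventually_spectrum_subset hU hAU),
    hNlim.eventually (eventually_spectrum_subset hU hBU)] with δ ⟨hinj, hne⟩ hMU hNU
  have hNdiag := diag_of_isHermitian (hNh δ)
  refine (cfc_le_cfc_iff (hdiag δ) hNdiag).2 (hgen _ _ _ _ (V δ)
    ((hdiag δ).genericRankOneUpdate hNdiag (fun x => ?_) hinj hne one_ne_zero)
    (fun i => hMU ((hdiag δ).mem_spectrum i)) fun i => hNU (hNdiag.mem_spectrum i))
  simp [N, toEuclideanLin_vecMulVec]

theorem cfc_le_cfc_of_rankOne (hU : U.OrdConnected)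
    (hf : ∀ (A : Matrix (Fin n) (Fin n) ℂ) (v : Fin n → ℂ), A.IsHermitian → spectrum ℝ A ⊆ U →
      spectrum ℝ (A + vecMulVec v (star v)) ⊆ U → cfc f A ≤ cfc f (A + vecMulVec v (star v)))
    {B : Matrix (Fin n) (Fin n) ℂ} (hA : A.IsHermitian) (hB : B.IsHermitian)
    (hAU : spectrum ℝ A ⊆ U) (hBU : spectrum ℝ B ⊆ U) (hAB : A ≤ B) : cfc f A ≤ cfc f B := by
  obtain ⟨m, v, hv⟩ := posSemidef_iff_eq_sum_vecMulVec.1 (Matrix.le_iff.1 hAB)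
  rw [sub_eq_iff_eq_add'] at hv
  clear hAB
  induction m generalizing A with
  | zero =>
    rw [hv, Finset.univ_eq_empty, Finset.sum_empty, add_zero]
  | succ m ih =>
    rw [Fin.sum_univ_succ, ← add_assoc] at hv
    have hv₀ := posSemidef_vecMulVec_self_star (v 0)
    have hCB : A + vecMulVec (v 0) (star (v 0)) ≤ B := by
      rw [hv, Matrix.le_iff, add_sub_cancel_left]
      exact posSemidef_sum _ fun i _ => posSemidef_vecMulVec_self_star _
    have hCU := spectrum_subset_of_le_of_le hU hA hB (le_add_of_nonneg_right hv₀.nonneg) hCB hAU hBU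
    exact (hf A (v 0) hA hAU hCU).trans
      (ih (hA.add hv₀.isHermitian) hCU (fun i => v i.succ) hv)

end RankOnePerturbation

section MatrixMonotoneOrder

open scoped MatrixOrder

lemma MatrixMonotoneOrder.of_generic_rankOneUpdate {n : ℕ} {a b : ℝ} {g : ℝ → ℝ}
    (hg : ContinuousOn g (Ioo a b))
    (hgen : ∀ (e u : OrthonormalBasis (Fin n) ℂ (EuclideanSpace ℂ (Fin n))) (c d : Fin n → ℝ)
      (v : EuclideanSpace ℂ (Fin n)), GenericRankOneUpdate e c u d 1 v → (∀ i, c i ∈ Ioo a b) →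
      (∀ i, d i ∈ Ioo a b) → ∀ w, quadForm e c g w ≤ quadForm u d g w) :
    MatrixMonotoneOrder n a b g := by
  intro A B hA hB hAI hBI hAB
  rw [← hA.cfc_eq, ← hB.cfc_eq]
  exact Matrix.le_iff.1 (cfc_le_cfc_of_rankOne ordConnected_Ioo
    (fun A v => cfc_le_cfc_add_vecMulVec (v := WithLp.toLp 2 v) isOpen_Ioo hg hgen) hA hB
    ((spectrum_subset_iff hA).2 hAI) ((spectrum_subset_iff hB).2 hBI) (Matrix.le_iff.2 hAB))

end MatrixMonotoneOrder

/-- If `f` is matrix convex of order `n` on `(a,b)` and `λ₀ ∈ (a,b)`, then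
`g(x) = [x, λ₀]_f` is matrix monotone of order `n` on `(a,b)`. -/
theorem stmt18 (n : ℕ) (hn : 2 ≤ n) (a b : ℝ) (f : ℝ → ℝ)
    (hf : MatrixConvexOrder n a b f)
    (lam0 : ℝ) (hlam0 : lam0 ∈ Ioo a b)
    (g : ℝ → ℝ)
    (hg : ∀ x, g x = if x = lam0 then derivWithin f (Ioo a b) lam0
      else (f x - f lam0) / (x - lam0)) :
    MatrixMonotoneOrder n a b g := by
  have hg_dslope : g = dslope f lam0 := by
    ext x
    rw [hg]
    split_ifs with hx
    · rw [hx, dslope_same, derivWithin_of_isOpen isOpen_Ioo hlam0]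
    · rw [dslope_of_ne _ hx, slope_def_field]
  have hq : QuadConvexOn n (Ioo a b) f := hf.quadConvexOn
  have hdiff : DifferentiableOn ℝ f (Ioo a b) := hq.differentiableOn hn
  have hcont : ContinuousOn (dslope f lam0) (Ioo a b) :=
    (continuousOn_dslope (isOpen_Ioo.mem_nhds hlam0)).2
      ⟨hdiff.continuousOn, hdiff.differentiableAt (isOpen_Ioo.mem_nhds hlam0)⟩
  rw [hg_dslope]
  exact .of_generic_rankOneUpdate hcont fun _ _ _ _ _ h hc hd w =>
    hq.quadForm_dslope_le hn h hc hd hlam0 w
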